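/- arXiv:1709.05685 — 2 statements merged into one kernel-verified Lean document; each statement's English description precedes it below -/
import Mathlib

section
/- Let F be a field of characteristic p > 0, H a t×n Hankel matrix of indeterminates with 2 ≤ t ≤ n, A = F[x_1,...,x_{n+t-1}], and I = I_t(H). Then there exists a homogeneous polynomial f ∈ I^{(n-t+1)} (the (n-t+1)-st symbolic power) whose initial term with respect to the lexicographic order x_1 > x_2 > ... > x_{n+t-1} is the squarefree monomial x_1 x_2 ··· x_{n+t-1}; consequently f^{p-1} ∈ (I^{[p]} :_A I) but f^{p-1} ∉ m^{[p]}, and hence by Fedder's criterion R = A/I is F-pure. -/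
set_option synthInstance.maxHeartbeats 1000000
set_option maxHeartbeats 1000000

open MvPolynomial Matrix

/-- The `q`-th Frobenius power of an ideal: the ideal generated by `q`-th powers of its
elements. -/
def frobeniusPower {R : Type*} [CommRing R] (q : ℕ) (I : Ideal R) : Ideal R :=
  Ideal.span ((fun x => x ^ q) '' (I : Set R))

/-- No chain of length `r` with gaps at least two in the support of `c` below `B`. -/
def NoChain (r B : ℕ) (c : ℕ → ℕ) : Prop :=
  ¬ ∃ a : ℕ → ℕ, (∀ i < r, a i < B ∧ c (a i) ≠ 0) ∧ ∀ i, i + 1 < r → a i + 2 ≤ a (i + 1)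

theorem NoChain.mono {r B B' : ℕ} {c : ℕ → ℕ} (h : NoChain r B c) (hB : B' ≤ B) :
    NoChain r B' c := by
  rintro ⟨a, h1, h2⟩
  exact h ⟨a, fun i hi => ⟨(h1 i hi).1.trans_le hB, (h1 i hi).2⟩, h2⟩

theorem NoChain.pred {r M : ℕ} {c : ℕ → ℕ} (h : NoChain (r + 1) (M + 1) c) (hM : c M ≠ 0) :
    NoChain r (M - 1) c := by
  rintro ⟨a, h1, h2⟩
  refine h ⟨fun i => if i < r then a i else M, ?_, ?_⟩
  · intro i hi
    by_cases hir : i < r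
    · have := h1 i hir
      simp only [hir, if_true]
      exact ⟨by omega, this.2⟩
    · simp only [hir, if_false]
      exact ⟨by omega, hM⟩
  · intro i hi
    by_cases hir : i + 1 < r
    · have h3 : i < r := by omega
      simp only [hir, h3, if_true]
      exact h2 i hir
    · have h3 : i < r := by omega
      have := h1 i h3
      simp only [hir, h3, if_true, if_false]
      omega

theorem poly_zero_of_ne {E : Type*} [Field E] [Infinite E] (G : Polynomial E) (x₀ : E)
    (h : ∀ w, w ≠ x₀ → G.eval w = 0) : G = 0 := by
  apply Polynomial.eq_zero_of_infinite_isRoot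
  refine Set.Infinite.mono ?_ (Set.finite_singleton x₀).infinite_compl
  intro w hw
  exact h w (by simpa using hw)

theorem indep_trivial {E ι : Type*} [Field E] (B : ℕ) (S : Finset ι) (a : ι → E)
    (c : ι → ℕ → ℕ) (y : ℕ → E)
    (hinj : ∀ s ∈ S, ∀ s' ∈ S, (∀ i < B, c s i = c s' i) → s = s')
    (hz : ∀ s ∈ S, ∀ i < B, c s i = 0)
    (hv : ∑ s ∈ S, a s * ∏ i ∈ Finset.range B, y i ^ c s i = 0) :
    ∀ s ∈ S, a s = 0 := by
  intro s hs
  have hS : S = {s} := by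
    ext s'
    simp only [Finset.mem_singleton]
    constructor
    · intro h
      exact hinj s' h s hs fun i hi => by rw [hz s' h i hi, hz s hs i hi]
    · rintro rfl; exact hs
  rw [hS, Finset.sum_singleton, Finset.prod_eq_one, mul_one] at hv
  · exact hv
  · intro i hi
    rw [hz s hs i (Finset.mem_range.1 hi), pow_zero]

theorem indep_step {E ι : Type*} [Field E] [Infinite E] (M : ℕ)
    (S : Finset ι) (a : ι → E) (c : ι → ℕ → ℕ) (s₀ : ι)
    (hmax : ∀ s ∈ S, c s M ≤ c s₀ M)
    (y : ℕ → E)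
    (hv : ∀ u v : E, ∑ s ∈ S, a s * ∏ i ∈ Finset.range (M + 1), (u * v ^ i + y i) ^ c s i = 0) :
    ∑ s ∈ S with (c s M = c s₀ M ∧ (M ≠ 0 → c s (M - 1) = c s₀ (M - 1))),
      a s * ∏ i ∈ Finset.range (M - 1), y i ^ c s i = 0 := by
  classical
  set α := c s₀ M with hα
  -- first limit
  have h1 : ∀ z : E, ∑ s ∈ S with c s M = α,
      a s * (z ^ α * ∏ i ∈ Finset.range M, ((if i + 1 = M then z else 0) + y i) ^ c s i) = 0 := by
    intro z
    let G : Polynomial E := ∑ s ∈ S, Polynomial.C (a s) *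
      ((Polynomial.C z + Polynomial.X * Polynomial.C (y M)) ^ c s M * Polynomial.X ^ (α - c s M) *
        ∏ i ∈ Finset.range M,
          (Polynomial.C z * Polynomial.X ^ (M - 1 - i) + Polynomial.C (y i)) ^ c s i)
    have hG : G = 0 := by
      apply poly_zero_of_ne G 0
      intro w hw
      have := congrArg (fun e => w ^ α * e) (hv (z * w ^ M * w⁻¹) w⁻¹)
      simp only [mul_zero, Finset.mul_sum] at this
      rw [← this]
      simp only [G, Polynomial.eval_finsetSum]
      refine Finset.sum_congr rfl fun s hs => ?_
      simp only [Polynomial.eval_mul, Polynomial.eval_C, Polynomial.eval_pow, Polynomial.eval_add,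
        Polynomial.eval_X, Polynomial.eval_prod]
      rw [Finset.prod_range_succ]
      have e1 : w ^ α = w ^ (α - c s M) * w ^ c s M := by
        rw [← pow_add, Nat.sub_add_cancel (hmax s hs)]
      have e2 : z + w * y M = w * (z * w ^ M * w⁻¹ * w⁻¹ ^ M + y M) := by
        have : w ^ M * w⁻¹ ^ M = 1 := by rw [← mul_pow, mul_inv_cancel₀ hw, one_pow]
        have h2 : w * w⁻¹ = 1 := mul_inv_cancel₀ hw
        linear_combination (-(z * w * w⁻¹)) * this - z * h2
      have e3 : ∏ i ∈ Finset.range M, (z * w ^ (M - 1 - i) + y i) ^ c s i =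
          ∏ i ∈ Finset.range M, (z * w ^ M * w⁻¹ * w⁻¹ ^ i + y i) ^ c s i := by
        refine Finset.prod_congr rfl fun i hi => ?_
        have hi' := Finset.mem_range.1 hi
        have e : w ^ M = w ^ (M - 1 - i) * w * w ^ i := by
          rw [← pow_succ, ← pow_add]; congr 1; omega
        have : w ^ i * w⁻¹ ^ i = 1 := by rw [← mul_pow, mul_inv_cancel₀ hw, one_pow]
        have h2 : w * w⁻¹ = 1 := mul_inv_cancel₀ hw
        congr 1
        rw [e]
        linear_combination (-(z * w ^ (M - 1 - i) * w * w⁻¹)) * this - z * w ^ (M - 1 - i) * h2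
      rw [e1, e2, e3, mul_pow]
      ring
    have h0 : G.eval 0 = 0 := by rw [hG, Polynomial.eval_zero]
    refine Eq.trans ?_ h0
    simp only [G, Polynomial.eval_finsetSum]
    rw [Finset.sum_filter]
    refine Finset.sum_congr rfl fun s hs => ?_
    simp only [Polynomial.eval_mul, Polynomial.eval_C, Polynomial.eval_pow, Polynomial.eval_add,
        Polynomial.eval_X, Polynomial.eval_prod]
    by_cases hc : c s M = α
    · rw [if_pos hc, hc, Nat.sub_self, pow_zero, zero_mul, add_zero, mul_one]
      congr 2
      refine Finset.prod_congr rfl fun i hi => ?_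
      have hi' := Finset.mem_range.1 hi
      by_cases h : i + 1 = M
      · have : M - 1 - i = 0 := by omega
        rw [if_pos h, this]; simp
      · have : M - 1 - i ≠ 0 := by omega
        rw [if_neg h, zero_pow this]; simp
    · rw [if_neg hc, zero_pow]
      · simp
      · have := hmax s hs; omega
  -- second step
  rcases Nat.eq_zero_or_pos M with hM | hM
  · have := h1 1
    simpa [hM] using this
  obtain ⟨K, rfl⟩ : ∃ K, M = K + 1 := ⟨M - 1, by omega⟩
  let G : Polynomial E := ∑ s ∈ S with c s (K + 1) = α,
    Polynomial.C (a s * ∏ i ∈ Finset.range K, y i ^ c s i) * Polynomial.X ^ c s K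
  have hG : G = 0 := by
    apply poly_zero_of_ne G (y K)
    intro w hw
    have := h1 (w - y K)
    have hne : (w - y K) ^ α ≠ 0 := pow_ne_zero _ (sub_ne_zero.2 hw)
    have h2 : (w - y K) ^ α * G.eval w = 0 := by
      rw [← this]
      simp only [G, Polynomial.eval_finsetSum, Finset.mul_sum]
      refine Finset.sum_congr rfl fun s hs => ?_
      simp only [Polynomial.eval_mul, Polynomial.eval_C, Polynomial.eval_pow, Polynomial.eval_X]
      rw [Finset.prod_range_succ]
      have : ∏ i ∈ Finset.range K, ((if i + 1 = K + 1 then w - y K else 0) + y i) ^ c s i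
          = ∏ i ∈ Finset.range K, y i ^ c s i := by
        refine Finset.prod_congr rfl fun i hi => ?_
        have hi' := Finset.mem_range.1 hi
        rw [if_neg (by omega), zero_add]
      rw [this]
      simp
      ring
    exact (mul_eq_zero.1 h2).resolve_left hne
  have h3 : G.coeff (c s₀ K) = 0 := by rw [hG, Polynomial.coeff_zero]
  rw [← h3]
  simp only [G, Polynomial.finsetSum_coeff, Polynomial.coeff_C_mul, Polynomial.coeff_X_pow]
  rw [Finset.sum_filter, Finset.sum_filter]
  refine Finset.sum_congr rfl fun s hs => ?_
  simp only [Nat.add_sub_cancel]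
  by_cases h4 : c s (K + 1) = α <;> by_cases h5 : c s K = c s₀ K <;> simp [h4, h5]
  intro h6; exact absurd h6.symm h5

theorem indep {E ι : Type*} [Field E] [Infinite E] : ∀ (q B : ℕ) (S : Finset ι) (a : ι → E)
    (c : ι → ℕ → ℕ)
    (_ : ∀ s ∈ S, ∀ s' ∈ S, (∀ i < B, c s i = c s' i) → s = s')
    (_ : ∀ s ∈ S, NoChain (q + 1) B (c s))
    (_ : ∀ u v : ℕ → E, ∑ s ∈ S, a s *
      ∏ i ∈ Finset.range B, (∑ l ∈ Finset.range q, u l * v l ^ i) ^ c s i = 0),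
    ∀ s ∈ S, a s = 0 := by
  classical
  intro q
  induction q with
  | zero =>
    intro B S a c hinj hch hv
    refine indep_trivial B S a c _ hinj ?_ (hv 0 0)
    intro s hs i hi
    by_contra hne
    exact hch s hs ⟨fun _ => i, fun _ _ => ⟨hi, hne⟩, fun j hj => by omega⟩
  | succ q ihq =>
    intro B
    induction B with
    | zero =>
      intro S a c hinj hch hv
      exact indep_trivial 0 S a c _ hinj (fun s hs i hi => by omega) (hv 0 0)
    | succ M ihM =>
      intro S a c hinj hch hv s₁ hs₁
      by_contra hne₁
      let T := S.filter fun s => a s ≠ 0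
      have hTv : ∀ y : ℕ → E, ∑ s ∈ T, a s * ∏ i ∈ Finset.range (M + 1), y i ^ c s i
          = ∑ s ∈ S, a s * ∏ i ∈ Finset.range (M + 1), y i ^ c s i := by
        intro y
        apply Finset.sum_subset (Finset.filter_subset _ _)
        intro s hs hsT
        have : a s = 0 := by
          by_contra h
          exact hsT (Finset.mem_filter.2 ⟨hs, h⟩)
        rw [this, zero_mul]
      have hs₁T : s₁ ∈ T := Finset.mem_filter.2 ⟨hs₁, hne₁⟩
      obtain ⟨s₀, hs₀, hmax⟩ := Finset.exists_max_image T (fun s => c s M) ⟨s₁, hs₁T⟩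
      have hTS : ∀ s ∈ T, s ∈ S := fun s hs => (Finset.mem_filter.1 hs).1
      by_cases h0 : c s₀ M = 0
      · have hz : ∀ s ∈ T, c s M = 0 := fun s hs => Nat.le_zero.1 (h0 ▸ hmax s hs)
        refine hne₁ (ihM T a c ?_ ?_ ?_ s₁ hs₁T)
        · intro s hs s' hs' h
          refine hinj s (hTS s hs) s' (hTS s' hs') fun i hi => ?_
          rcases Nat.lt_succ_iff_lt_or_eq.1 hi with h' | rfl
          · exact h i h'
          · rw [hz s hs, hz s' hs']
        · intro s hs
          exact (hch s (hTS s hs)).mono (Nat.le_succ M)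
        · intro u v
          have h1 := hv u v
          rw [← hTv] at h1
          rw [← h1]
          refine Finset.sum_congr rfl fun s hs => ?_
          rw [Finset.prod_range_succ, hz s hs, pow_zero, mul_one]
      · have key : ∀ u v : ℕ → E, _ := fun u v =>
          indep_step M T a c s₀ hmax
            (fun i => ∑ l ∈ Finset.range q, u l * v l ^ i) (by
              intro u' v'
              have h1 := hv (Function.update u q u') (Function.update v q v')
              rw [← hTv] at h1
              rw [← h1]
              refine Finset.sum_congr rfl fun s hs => ?_
              congr 1
              refine Finset.prod_congr rfl fun i hi => ?_
              congr 1
              rw [Finset.sum_range_succ, add_comm]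
              simp only [Function.update_self]
              congr 1
              refine Finset.sum_congr rfl fun l hl => ?_
              have hl' := Finset.mem_range.1 hl
              rw [Function.update_of_ne (by omega), Function.update_of_ne (by omega)])
        have := ihq (M - 1) _ a c ?_ ?_ key s₀
          (Finset.mem_filter.2 ⟨hs₀, rfl, fun _ => rfl⟩)
        · exact (Finset.mem_filter.1 hs₀).2 this
        · intro s hs s' hs' h
          obtain ⟨hs, hs1, hs2⟩ := Finset.mem_filter.1 hs
          obtain ⟨hs', hs1', hs2'⟩ := Finset.mem_filter.1 hs'
          refine hinj s (hTS s hs) s' (hTS s' hs') fun i hi => ?_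
          rcases lt_or_ge i (M - 1) with h' | h'
          · exact h i h'
          · have : i = M ∨ (M ≠ 0 ∧ i = M - 1) := by omega
            rcases this with rfl | ⟨h3, rfl⟩
            · rw [hs1, hs1']
            · rw [hs2 h3, hs2' h3]
        · intro s hs
          obtain ⟨hs, hs1, hs2⟩ := Finset.mem_filter.1 hs
          exact (hch s (hTS s hs)).pred (by rw [hs1]; exact h0)

open Pointwise in
/-- Pigeonhole: a high power of an ideal generated by `h` elements. -/
theorem pigeonhole_pow {R ι : Type*} [CommRing R] [Fintype ι] (e : ι → R) (J : Ideal R) (p m : ℕ)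
    (he : ∀ j, e j ^ (p + 1) ∈ J) (hm : Fintype.card ι * p < m) :
    (Ideal.span (Set.range e)) ^ m ≤ J := by
  classical
  have h1 : (Ideal.span (Set.range e)) ^ m = Ideal.span ((Set.range e) ^ m) :=
    Submodule.span_pow _ _
  rw [h1, Ideal.span_le]
  intro z hz
  obtain ⟨f, rfl⟩ := Set.mem_pow.1 hz
  rw [List.prod_ofFn]
  choose g hg using fun i => (f i).2
  obtain ⟨j, hj⟩ := Fintype.exists_lt_card_fiber_of_mul_lt_card g (n := p) (by simpa using hm)
  have : e j ^ (p + 1) ∣ ∏ i, (f i : R) := by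
    rw [← Finset.prod_filter_mul_prod_filter_not Finset.univ (fun i => g i = j)]
    apply Dvd.dvd.mul_right
    have : ∏ i with g i = j, (f i : R) = ∏ i with g i = j, e j := by
      refine Finset.prod_congr rfl fun i hi => ?_
      rw [← hg i, (Finset.mem_filter.1 hi).2]
    rw [this, Finset.prod_const]
    exact pow_dvd_pow _ hj
  obtain ⟨r, hr⟩ := this
  show ∏ i, (f i : R) ∈ J
  rw [hr]
  exact J.mul_mem_right _ (he j)

/-- The bordered minor. -/
noncomputable def bord {R : Type*} [CommRing R] (x : ℕ → R) (q j : ℕ) : R :=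
  (Matrix.of fun i c : Fin (q + 1) => x (i + if (c : ℕ) < q then (c : ℕ) else j)).det

/-- The Hankel block. -/
noncomputable def hdel {R : Type*} [CommRing R] (x : ℕ → R) (q : ℕ) : R :=
  (Matrix.of fun i c : Fin q => x (i + c)).det

theorem bord_zero {R : Type*} [CommRing R] (x : ℕ → R) (q j : ℕ) (hj : j < q) :
    bord x q j = 0 := by
  unfold bord
  apply Matrix.det_zero_of_column_eq (i := ⟨j, by omega⟩) (j := Fin.last q)
  · intro h; have := congrArg Fin.val h; simp at this; omega
  · intro k; simp [hj]

theorem bord_expand {R : Type*} [CommRing R] (x : ℕ → R) (q : ℕ) :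
    ∃ c : ℕ → R, ∀ j, bord x q j = ∑ i ∈ Finset.range q, c i * x (i + j) + hdel x q * x (q + j) := by
  let N : Fin (q + 1) → Matrix (Fin q) (Fin q) R := fun i =>
    Matrix.of fun k c => x ((i.succAbove k : Fin (q + 1)) + c)
  refine ⟨fun i => if h : i < q + 1 then (-1) ^ (i + q) * (N ⟨i, h⟩).det else 0, fun j => ?_⟩
  unfold bord
  rw [Matrix.det_succ_column _ (Fin.last q), Fin.sum_univ_castSucc, ← Fin.sum_univ_eq_sum_range
    (fun i => (if h : i < q + 1 then (-1) ^ (i + q) * (N ⟨i, h⟩).det else 0) * x (i + j))]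
  have hN : ∀ i : Fin (q + 1), ((Matrix.of fun i c : Fin (q + 1) =>
      x (i + if (c : ℕ) < q then (c : ℕ) else j)).submatrix i.succAbove (Fin.last q).succAbove)
      = N i := by
    intro i
    ext k c
    simp [N]
  simp only [hN]
  congr 1
  · refine Finset.sum_congr rfl fun i _ => ?_
    have : (i : ℕ) < q + 1 := by omega
    rw [dif_pos this]
    simp only [Matrix.of_apply, Fin.val_castSucc, Fin.val_last, lt_irrefl, if_false]
    have : (⟨i, this⟩ : Fin (q + 1)) = i.castSucc := rfl
    rw [this]; ring
  · have h1 : (N (Fin.last q)).det = hdel x q := by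
      unfold hdel
      congr 1
      ext k c
      simp [N]
    have h2 : ((-1 : R)) ^ (q + q) = 1 := Even.neg_one_pow ⟨q, rfl⟩
    simp only [Matrix.of_apply, Fin.val_last, lt_irrefl, if_false, h1, h2]
    ring

theorem bord_mem {R : Type*} [CommRing R] (x : ℕ → R) (q n j : ℕ) (hj : j < n) :
    bord x q j ∈ Ideal.span (Set.range fun l : Fin (n - q) => bord x q (q + l)) := by
  by_cases h : j < q
  · rw [bord_zero x q j h]; exact Ideal.zero_mem _
  · refine Ideal.subset_span ⟨⟨j - q, by omega⟩, ?_⟩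
    simp only
    congr 1
    omega

/-- Key lemma: powers of the block times a big minor lie in a power of the bordered-minor ideal. -/
theorem hdel_pow_mul_det_mem {R : Type*} [CommRing R] (x : ℕ → R) (q r o : ℕ)
    (b : Fin (q + r) → ℕ) (K : Ideal R)
    (hK : ∀ i < r, ∀ j, bord x q (o + i + b j) ∈ K) :
    hdel x q ^ r * (Matrix.of fun i j : Fin (q + r) => x (o + i + b j)).det ∈ K ^ r := by
  classical
  obtain ⟨c, hc⟩ := bord_expand x q
  let δ := hdel x q
  let L : Matrix (Fin (q + r)) (Fin (q + r)) R := Matrix.of fun i k =>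
    if (i : ℕ) < q then (if i = k then 1 else 0)
    else if i = k then δ else if (i : ℕ) - q ≤ k ∧ (k : ℕ) < i then c (k - (i - q)) else 0
  have hL : L.det = δ ^ r := by
    rw [Matrix.det_of_isLowerTriangular]
    · rw [Fin.prod_univ_add]
      simp [L]
    · intro i k hik
      have hik' : i < k := hik
      have h1 : i ≠ k := hik'.ne
      have h2 : ¬ k < i := not_lt_of_gt hik'
      simp [L, h1, h2]
  set M := (Matrix.of fun i j : Fin (q + r) => x (o + i + b j)) with hM
  have hLM : ∀ i j : Fin (q + r), q ≤ (i : ℕ) → (L * M) i j = bord x q (o + (i - q) + b j) := by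
    intro i j hi
    rw [hc, Matrix.mul_apply]
    let φ : ℕ → R := fun k => (if k = (i : ℕ) then δ else if (i : ℕ) - q ≤ k ∧ (k : ℕ) < i
          then c (k - (i - q)) else 0) * x (o + k + b j)
    have e1 : ∀ k : Fin (q + r), L i k * M k j = φ k := by
      intro k
      simp only [L, M, Matrix.of_apply, φ]
      rw [if_neg (by omega)]
      congr 2
      simp only [Fin.ext_iff, eq_comm]
    rw [Finset.sum_congr rfl fun k _ => e1 k, Fin.sum_univ_eq_sum_range φ]
    simp only [φ]
    have hsub : Finset.Ico ((i : ℕ) - q) (i + 1) ⊆ Finset.range (q + r) := by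
      intro k hk
      have := i.2
      simp only [Finset.mem_Ico, Finset.mem_range] at *
      omega
    rw [← Finset.sum_subset hsub, Finset.sum_Ico_eq_sum_range]
    · have : (i : ℕ) + 1 - (i - q) = q + 1 := by omega
      rw [this, Finset.sum_range_succ]
      congr 1
      · refine Finset.sum_congr rfl fun k hk => ?_
        have hk' := Finset.mem_range.1 hk
        rw [if_neg (by omega), if_pos (by omega)]
        congr 2 <;> omega
      · rw [if_pos (by omega)]
        congr 2; omega
    · intro k hk hk2
      simp only [Finset.mem_Ico, Finset.mem_range] at *
      rw [if_neg (by omega), if_neg (by omega), zero_mul]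
  have : δ ^ r * M.det = (L * M).det := by rw [Matrix.det_mul, hL]
  change δ ^ r * M.det ∈ K ^ r
  rw [this, ← Matrix.det_transpose, Matrix.det_apply]
  refine Ideal.sum_mem _ fun σ _ => ?_
  rw [Units.smul_def, zsmul_eq_mul]
  apply Ideal.mul_mem_left
  rw [Fin.prod_univ_add]
  apply Ideal.mul_mem_left
  have : ∏ _i : Fin r, K = K ^ r := by simp
  rw [← this]
  apply Ideal.prod_mem_prod
  intro i _
  rw [Matrix.transpose_apply, hLM _ _ (by simp)]
  apply hK
  simp

/-- exponent of the term of a permutation. -/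
noncomputable def dexp {N k : ℕ} (g : Fin k → ℕ) (h : ∀ i j : Fin k, (i : ℕ) + g j < N)
    (σ : Equiv.Perm (Fin k)) : Fin N →₀ ℕ :=
  ∑ i, Finsupp.single ⟨(σ i : ℕ) + g i, h _ _⟩ 1

theorem dexp_lt {N k : ℕ} (g : Fin k → ℕ) (hg : StrictMono g)
    (h : ∀ i j : Fin k, (i : ℕ) + g j < N) (σ : Equiv.Perm (Fin k)) (hσ : σ ≠ 1) :
    toLex (dexp g h σ) < toLex (dexp g h 1) := by
  classical
  have hne : {i | σ i ≠ i}.Nonempty := by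
    by_contra hcon
    apply hσ
    ext i
    by_contra h'
    exact hcon ⟨i, fun h2 => h' (by simp [h2])⟩
  obtain ⟨i₀, hi₀, hmin⟩ := WellFounded.has_min (wellFounded_lt (α := Fin k)) _ hne
  have hfix : ∀ i < i₀, σ i = i := fun i hi => by
    by_contra h'
    exact hmin i h' hi
  have hge : ∀ i, i₀ ≤ i → i₀ ≤ σ i := by
    intro i hi
    by_contra h'
    push Not at h'
    have := σ.injective (hfix _ h')
    rw [this] at h'
    exact absurd hi (not_le_of_gt h')
  have hgt : ∀ i, i₀ ≤ i → (i₀ : ℕ) + g i₀ < (σ i : ℕ) + g i := by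
    intro i hi
    rcases hi.eq_or_lt with rfl | hlt
    · have h1 : i₀ ≤ σ i₀ := hge _ le_rfl
      have h2 : σ i₀ ≠ i₀ := hi₀
      have : i₀ < σ i₀ := lt_of_le_of_ne h1 h2.symm
      have : (i₀ : ℕ) < σ i₀ := this
      omega
    · have h1 : (i₀ : ℕ) ≤ σ i := hge _ hi
      have := hg hlt
      omega
  have hev : ∀ (τ : Equiv.Perm (Fin k)) (m : Fin N), dexp g h τ m =
      ∑ i, if (τ i : ℕ) + g i = m then 1 else 0 := by
    intro τ m
    simp only [dexp, Finsupp.finsetSum_apply, Finsupp.single_apply, Fin.ext_iff]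
  refine ⟨⟨(i₀ : ℕ) + g i₀, h _ _⟩, ?_, ?_⟩
  · intro m hm
    have hm' : (m : ℕ) < i₀ + g i₀ := hm
    change dexp g h σ m = dexp g h 1 m
    rw [hev, hev]
    refine Finset.sum_congr rfl fun i _ => ?_
    rcases lt_or_ge i i₀ with hi | hi
    · rw [hfix i hi]; rfl
    · have h1 := hgt i hi
      have h2 : g i₀ ≤ g i := hg.monotone hi
      have h3 : (i₀ : ℕ) ≤ i := hi
      have h4 : (((1 : Equiv.Perm (Fin k)) i : Fin k) : ℕ) = i := rfl
      rw [if_neg (by omega), if_neg (by omega)]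
  · change dexp g h σ _ < dexp g h 1 _
    rw [hev, hev]
    apply Finset.sum_lt_sum
    · intro i _
      rcases lt_or_ge i i₀ with hi | hi
      · rw [hfix i hi]; rfl
      · have h1 := hgt i hi
        rw [if_neg (by simp only; omega)]
        exact Nat.zero_le _
    · refine ⟨i₀, Finset.mem_univ _, ?_⟩
      have h1 := hgt i₀ le_rfl
      rw [if_neg (by simp only; omega)]
      simp

/-- Hankel-type matrix of variables. -/
noncomputable def hmat (F : Type*) [Field F] {N k : ℕ} (g : Fin k → ℕ)
    (h : ∀ i j : Fin k, (i : ℕ) + g j < N) : Matrix (Fin k) (Fin k) (MvPolynomial (Fin N) F) :=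
  Matrix.of fun i j => X ⟨(i : ℕ) + g j, h i j⟩

theorem hmat_det (F : Type*) [Field F] {N k : ℕ} (g : Fin k → ℕ)
    (h : ∀ i j : Fin k, (i : ℕ) + g j < N) :
    (hmat F g h).det = ∑ σ : Equiv.Perm (Fin k),
      ((Equiv.Perm.sign σ : ℤ) : MvPolynomial (Fin N) F) * monomial (dexp g h σ) 1 := by
  rw [Matrix.det_apply]
  refine Finset.sum_congr rfl fun σ _ => ?_
  rw [Units.smul_def, zsmul_eq_mul]
  congr 1
  simp only [dexp, hmat, Matrix.of_apply]
  rw [monomial_sum_one]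
  rfl

theorem hmat_homog (F : Type*) [Field F] {N k : ℕ} (g : Fin k → ℕ)
    (h : ∀ i j : Fin k, (i : ℕ) + g j < N) : (hmat F g h).det.IsHomogeneous k := by
  rw [Matrix.det_apply]
  apply IsHomogeneous.sum
  intro σ _
  rw [Units.smul_def, zsmul_eq_mul]
  have h1 : (((Equiv.Perm.sign σ : ℤ) : MvPolynomial (Fin N) F)).IsHomogeneous 0 := by
    have : ((Equiv.Perm.sign σ : ℤ) : MvPolynomial (Fin N) F)
      = C ((Equiv.Perm.sign σ : ℤ) : F) := by simp
    rw [this]; exact isHomogeneous_C _ _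
  have h2 : (∏ i, hmat F g h (σ i) i).IsHomogeneous (∑ _i : Fin k, 1) :=
    IsHomogeneous.prod _ _ _ fun i _ => isHomogeneous_X _ _
  have := h1.mul h2
  simpa using this

theorem hmat_coeff (F : Type*) [Field F] {N k : ℕ} (g : Fin k → ℕ) (hg : StrictMono g)
    (h : ∀ i j : Fin k, (i : ℕ) + g j < N) :
    coeff (dexp g h 1) (hmat F g h).det = 1 := by
  classical
  rw [hmat_det, coeff_sum, Finset.sum_eq_single 1]
  · simp
  · intro σ _ hσ
    have h1 : ((Equiv.Perm.sign σ : ℤ) : MvPolynomial (Fin N) F)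
      = C ((Equiv.Perm.sign σ : ℤ) : F) := by simp
    rw [h1, coeff_C_mul, coeff_monomial, if_neg, mul_zero]
    intro h2
    have := dexp_lt g hg h σ hσ
    rw [h2] at this
    exact lt_irrefl _ this
  · simp

theorem hmat_support (F : Type*) [Field F] {N k : ℕ} (g : Fin k → ℕ) (hg : StrictMono g)
    (h : ∀ i j : Fin k, (i : ℕ) + g j < N) (d : Fin N →₀ ℕ) (hd : d ∈ (hmat F g h).det.support) :
    toLex d ≤ toLex (dexp g h 1) := by
  classical
  by_contra hcon
  push Not at hcon
  rw [mem_support_iff, hmat_det, coeff_sum] at hd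
  apply hd
  apply Finset.sum_eq_zero
  intro σ _
  have h1 : ((Equiv.Perm.sign σ : ℤ) : MvPolynomial (Fin N) F)
      = C ((Equiv.Perm.sign σ : ℤ) : F) := by simp
  rw [h1, coeff_C_mul, coeff_monomial, if_neg, mul_zero]
  rintro rfl
  by_cases hσ : σ = 1
  · rw [hσ] at hcon; exact lt_irrefl _ hcon
  · exact lt_asymm hcon (dexp_lt g hg h σ hσ)

theorem lex_degree_eq {F : Type*} [Field F] {N : ℕ} (P : MvPolynomial (Fin N) F) (D : Fin N →₀ ℕ)
    (h1 : coeff D P = 1) (h2 : ∀ d ∈ P.support, toLex d ≤ toLex D) :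
    MonomialOrder.lex.degree P = D ∧ MonomialOrder.lex.leadingCoeff P = 1 := by
  have hd : MonomialOrder.lex.degree P = D := by
    apply (MonomialOrder.lex (σ := Fin N)).toSyn.injective
    apply le_antisymm
    · rw [MonomialOrder.degree_le_iff]
      exact h2
    · apply MonomialOrder.le_degree
      rw [mem_support_iff, h1]
      exact one_ne_zero
  exact ⟨hd, by rw [MonomialOrder.leadingCoeff, hd, h1]⟩

/-- The components of a polynomial over the image of `expand p`. -/
noncomputable def lam (F : Type*) [Field F] (N p : ℕ) (e : Fin N →₀ ℕ) :
    MvPolynomial (Fin N) F →ₗ[F] MvPolynomial (Fin N) F :=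
  (basisMonomials (Fin N) F).constr F fun c =>
    if c.mapRange (· % p) (Nat.zero_mod p) = e then
      monomial (c.mapRange (· / p) (Nat.zero_div p)) 1 else 0

theorem lam_monomial (F : Type*) [Field F] (N p : ℕ) (e c : Fin N →₀ ℕ) (r : F) :
    lam F N p e (monomial c r) = if c.mapRange (· % p) (Nat.zero_mod p) = e then
      monomial (c.mapRange (· / p) (Nat.zero_div p)) r else 0 := by
  have : monomial c r = r • basisMonomials (Fin N) F c := by
    simp [smul_monomial]
  rw [this, map_smul, lam, Module.Basis.constr_basis]
  split_ifs <;> simp [smul_monomial]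

theorem lam_expand_mul (F : Type*) [Field F] (N p : ℕ) (hp : 0 < p) (e : Fin N →₀ ℕ)
    (a b : MvPolynomial (Fin N) F) : lam F N p e (expand p a * b) = a * lam F N p e b := by
  induction a using MvPolynomial.induction_on' with
  | add a1 a2 h1 h2 => rw [map_add, add_mul, map_add, h1, h2, add_mul]
  | monomial c r =>
    induction b using MvPolynomial.induction_on' with
    | add b1 b2 h1 h2 => rw [mul_add, map_add, map_add, h1, h2, mul_add]
    | monomial c' r' =>
      rw [expand_monomial, monomial_mul, lam_monomial, lam_monomial]
      have h1 : (p • c + c').mapRange (· % p) (Nat.zero_mod p) =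
          c'.mapRange (· % p) (Nat.zero_mod p) := by
        ext i; simp
      have h2 : (p • c + c').mapRange (· / p) (Nat.zero_div p) =
          c + c'.mapRange (· / p) (Nat.zero_div p) := by
        ext i; simp [Nat.mul_add_div hp]
      rw [h1, h2]
      split_ifs
      · rw [monomial_mul]
      · rw [mul_zero]

theorem sum_lam (F : Type*) [Field F] (N p : ℕ) (w : MvPolynomial (Fin N) F)
    (E : Finset (Fin N →₀ ℕ))
    (hE : ∀ c ∈ w.support, c.mapRange (· % p) (Nat.zero_mod p) ∈ E) :
    ∑ e ∈ E, monomial e 1 * expand p (lam F N p e w) = w := by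
  classical
  conv_rhs => rw [w.as_sum]
  have : ∀ e, lam F N p e w = ∑ c ∈ w.support, lam F N p e (monomial c (coeff c w)) := by
    intro e
    conv_lhs => rw [w.as_sum, map_sum]
  simp only [this, map_sum, Finset.mul_sum]
  rw [Finset.sum_comm]
  refine Finset.sum_congr rfl fun c hc => ?_
  rw [Finset.sum_eq_single (c.mapRange (· % p) (Nat.zero_mod p))]
  · rw [lam_monomial, if_pos rfl, expand_monomial, monomial_mul, one_mul]
    congr 2
    ext i
    simp [Nat.mod_add_div]
  · intro e _ he
    rw [lam_monomial, if_neg (Ne.symm he), map_zero, mul_zero]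
  · intro h
    exact absurd (hE c hc) h

theorem lam_mem (F : Type*) [Field F] (N p : ℕ) (hp : 0 < p) (I : Ideal (MvPolynomial (Fin N) F))
    (e : Fin N →₀ ℕ) (w : MvPolynomial (Fin N) F) (hw : w ∈ Ideal.map (expand p) I) :
    lam F N p e w ∈ I := by
  rw [Ideal.map] at hw
  induction hw using Submodule.span_induction with
  | zero => rw [map_zero]; exact I.zero_mem
  | add a b _ _ h1 h2 => rw [map_add]; exact I.add_mem h1 h2
  | mem x hx =>
    obtain ⟨a, ha, rfl⟩ := hx
    have := lam_expand_mul F N p hp e a 1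
    rw [mul_one] at this
    change lam F N p e (expand p a) ∈ I
    rw [this]
    exact I.mul_mem_right _ ha
  | smul r x hx h =>
    -- strengthen
    revert r
    have key : ∀ x ∈ Submodule.span (MvPolynomial (Fin N) F) (expand p '' (I : Set _)), ∀ r,
        lam F N p e (r * x) ∈ I := by
      intro x hx
      induction hx using Submodule.span_induction with
      | zero => intro r; rw [mul_zero, map_zero]; exact I.zero_mem
      | add a b _ _ h1 h2 => intro r; rw [mul_add, map_add]; exact I.add_mem (h1 r) (h2 r)
      | mem x hx =>
        intro r
        obtain ⟨a, ha, rfl⟩ := hx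
        rw [mul_comm, lam_expand_mul F N p hp]
        exact I.mul_mem_right _ ha
      | smul s x hx h =>
        intro r
        rw [smul_eq_mul, ← mul_assoc]
        exact h _
    exact fun r => key x hx r

theorem expand_nzd (F : Type*) [Field F] (N p : ℕ) (hp : 0 < p)
    (I : Ideal (MvPolynomial (Fin N) F)) (δ : MvPolynomial (Fin N) F)
    (hδ : ∀ u, δ * u ∈ I → u ∈ I) (w : MvPolynomial (Fin N) F)
    (hw : expand p δ * w ∈ Ideal.map (expand p) I) : w ∈ Ideal.map (expand p) I := by
  classical
  rw [← sum_lam F N p w (w.support.image fun c => c.mapRange (· % p) (Nat.zero_mod p))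
    (fun c hc => Finset.mem_image_of_mem _ hc)]
  refine Ideal.sum_mem _ fun e _ => Ideal.mul_mem_left _ _ ?_
  apply Ideal.mem_map_of_mem
  apply hδ
  rw [← lam_expand_mul F N p hp]
  exact lam_mem F N p hp I e _ hw

/-- The sequence of variables. -/
noncomputable def xs (F : Type*) [Field F] (N : ℕ) (i : ℕ) : MvPolynomial (Fin N) F :=
  if h : i < N then X ⟨i, h⟩ else 0

/-- The ideal of maximal minors. -/
noncomputable def maxMinors (F : Type*) [Field F] (q n : ℕ) : Ideal (MvPolynomial (Fin (n + q)) F) :=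
  Ideal.span (Set.range fun g : Fin (q + 1) → Fin n =>
    (Matrix.of fun i c : Fin (q + 1) => xs F (n + q) (i + (g c : ℕ))).det)

theorem det_lowrank_zero {R : Type*} [CommRing R] (q : ℕ) (u v : ℕ → R)
    (g : Fin (q + 1) → ℕ) :
    (Matrix.of fun i c : Fin (q + 1) =>
      ∑ l ∈ Finset.range q, u l * v l ^ ((i : ℕ) + g c)).det = 0 := by
  let U : Matrix (Fin (q + 1)) (Fin (q + 1)) R := Matrix.of fun i l =>
    if (l : ℕ) < q then u l * v l ^ (i : ℕ) else 0
  let W : Matrix (Fin (q + 1)) (Fin (q + 1)) R := Matrix.of fun l c => v l ^ g c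
  have : (Matrix.of fun i c : Fin (q + 1) =>
      ∑ l ∈ Finset.range q, u l * v l ^ ((i : ℕ) + g c)) = U * W := by
    ext i c
    rw [Matrix.mul_apply, Fin.sum_univ_castSucc]
    simp only [Matrix.of_apply, U, W, Fin.val_castSucc, Fin.is_lt, if_true, Fin.val_last,
      lt_irrefl, if_false, zero_mul, add_zero]
    rw [← Fin.sum_univ_eq_sum_range (fun l => u l * v l ^ ((i : ℕ) + g c))]
    refine Finset.sum_congr rfl fun l _ => ?_
    rw [pow_add, mul_assoc]
  rw [this, Matrix.det_mul, Matrix.det_eq_zero_of_column_eq_zero (A := U) (Fin.last q), zero_mul]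
  intro i
  simp [U]

theorem aeval_hI {F R : Type*} [Field F] [CommRing R] [Algebra F R] (q n : ℕ) (u v : ℕ → R)
    (P : MvPolynomial (Fin (n + q)) F) (hP : P ∈ maxMinors F q n) :
    aeval (fun i : Fin (n + q) => ∑ l ∈ Finset.range q, u l * v l ^ (i : ℕ)) P = 0 := by
  have : maxMinors F q n ≤ RingHom.ker (aeval (R := F)
      (fun i : Fin (n + q) => ∑ l ∈ Finset.range q, u l * v l ^ (i : ℕ))) := by
    rw [maxMinors, Ideal.span_le]
    rintro _ ⟨g, rfl⟩
    rw [SetLike.mem_coe, RingHom.mem_ker, AlgHom.map_det, ← det_lowrank_zero q u v (fun c => g c)]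
    congr 1
    ext i c
    have : (i : ℕ) + g c < n + q := by omega
    simp [xs, this]
  exact this hP

/-- vanishing on the parametrized points implies membership -/
theorem mem_hI_of_vanish {F E : Type*} [Field F] [Field E] [Infinite E] [Algebra F E] (q n : ℕ)
    (P : MvPolynomial (Fin (n + q)) F)
    (hP : ∀ u v : ℕ → E,
      aeval (fun i : Fin (n + q) => ∑ l ∈ Finset.range q, u l * v l ^ (i : ℕ)) P = 0) :
    P ∈ maxMinors F q n := by
  classical
  have hb : ∀ (g : Fin (q + 1) → Fin n) (i j : Fin (q + 1)), (i : ℕ) + (g j : ℕ) < n + q := by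
    intro g i j; have := (g j).2; have := i.2; omega
  let B : Set (MvPolynomial (Fin (n + q)) F) :=
    {b | ∃ g : Fin (q + 1) → Fin n, StrictMono g ∧
      b = (hmat F (fun c => (g c : ℕ)) (hb g)).det}
  have hlead : ∀ (g : Fin (q + 1) → Fin n), StrictMono g → _ := fun g hg =>
    lex_degree_eq _ _ (hmat_coeff F (fun c => (g c : ℕ)) (fun a b h => hg h) (hb g))
      (hmat_support F (fun c => (g c : ℕ)) (fun a b h => hg h) (hb g))
  have hBI : ∀ b ∈ B, b ∈ maxMinors F q n := by
    rintro _ ⟨g, hg, rfl⟩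
    refine Ideal.subset_span ⟨g, ?_⟩
    simp only
    congr 1
    ext1 i c
    simp [hmat, xs, hb g i c]
  obtain ⟨G, r, hr1, -, hr3⟩ := (MonomialOrder.lex (σ := Fin (n + q))).div_set (B := B) (by
    rintro _ ⟨g, hg, rfl⟩
    rw [(hlead g hg).2]; exact isUnit_one) P
  have hlin : Finsupp.linearCombination _ (fun (b : B) ↦ (b : MvPolynomial (Fin (n + q)) F)) G
      ∈ maxMinors F q n := by
    rw [Finsupp.linearCombination_apply]
    exact Ideal.sum_mem _ fun b _ => Ideal.mul_mem_left _ _ (hBI b b.2)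
  suffices r = 0 by
    rw [hr1, this, add_zero]; exact hlin
  have hrv : ∀ u v : ℕ → E,
      aeval (fun i : Fin (n + q) => ∑ l ∈ Finset.range q, u l * v l ^ (i : ℕ)) r = 0 := by
    intro u v
    have := hP u v
    rw [hr1, map_add, aeval_hI q n u v _ hlin, zero_add] at this
    exact this
  let c : (Fin (n + q) →₀ ℕ) → ℕ → ℕ := fun s i => if h : i < n + q then s ⟨i, h⟩ else 0
  have key := indep (E := E) q (n + q) r.support (fun s => algebraMap F E (coeff s r)) c ?_ ?_ ?_
  · ext s
    by_cases hs : s ∈ r.support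
    · have := key s hs
      simpa using this
    · simpa using hs
  · intro s _ s' _ h
    ext i
    have := h i i.2
    simpa [c] using this
  · rintro s hs ⟨a, ha1, ha2⟩
    have hmono : ∀ i d, i + d < q + 1 → a i + 2 * d ≤ a (i + d) := by
      intro i d
      induction d with
      | zero => simp
      | succ d ih =>
        intro h
        have h1 := ih (by omega)
        have h2 := ha2 (i + d) (by omega)
        have h3 : i + (d + 1) = i + d + 1 := by omega
        rw [h3]; omega
    have hlow : ∀ i < q + 1, 2 * i ≤ a i := by
      intro i hi
      have := hmono 0 i (by omega)
      rw [zero_add] at this; omega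
    have hup : ∀ i < q + 1, a i - i < n := by
      intro i hi
      have h1 := hmono i (q - i) (by omega)
      have h2 : i + (q - i) = q := by omega
      rw [h2] at h1
      have h3 := (ha1 q (by omega)).1
      have h4 := hlow i hi
      omega
    let g : Fin (q + 1) → Fin n := fun i => ⟨a i - i, hup i i.2⟩
    have hg : StrictMono g := by
      intro i j hij
      have hij' : (i : ℕ) < j := hij
      have h1 := hmono i (j - i) (by omega)
      have h2 : (i : ℕ) + (j - i) = j := by omega
      rw [h2] at h1
      have h3 := hlow i i.2
      change a i - i < a j - j
      omega
    refine hr3 s hs _ ⟨g, hg, rfl⟩ ?_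
    rw [(hlead g hg).1]
    intro m
    simp only [dexp, Finsupp.finsetSum_apply, Finsupp.single_apply, Fin.ext_iff]
    by_cases hm : ∃ i : Fin (q + 1), a i = m
    · obtain ⟨i, hi⟩ := hm
      rw [Finset.sum_eq_single i]
      · have := (ha1 i i.2).2
        simp only [c, hi, m.2, dif_pos] at this
        split_ifs
        · exact Nat.one_le_iff_ne_zero.2 this
        · exact Nat.zero_le _
      · intro j _ hj
        rw [if_neg]
        have h0 := hlow j j.2
        have hji : a j ≠ a i := by
          have : (j : ℕ) ≠ i := fun h => hj (Fin.ext h)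
          rcases lt_or_gt_of_ne this with h | h
          · have h1 := hmono j (i - j) (by omega)
            have h2 : (j : ℕ) + (i - j) = i := by omega
            rw [h2] at h1; omega
          · have h1 := hmono i (j - i) (by omega)
            have h2 : (i : ℕ) + (j - i) = j := by omega
            rw [h2] at h1; omega
        have h5 : (((1 : Equiv.Perm (Fin (q + 1))) j : Fin (q + 1)) : ℕ) = j := rfl
        simp only [g]
        omega
      · simp
    · rw [Finset.sum_eq_zero]
      · exact Nat.zero_le _
      · intro j _
        rw [if_neg]
        have h0 := hlow j j.2
        have h5 : (((1 : Equiv.Perm (Fin (q + 1))) j : Fin (q + 1)) : ℕ) = j := rfl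
        have h6 : a j ≠ m := fun h => hm ⟨j, h⟩
        simp only [g]
        omega
  · intro u v
    have := hrv u v
    rw [aeval_def, eval₂_eq'] at this
    rw [← this]
    refine Finset.sum_congr rfl fun s _ => ?_
    congr 1
    rw [← Fin.prod_univ_eq_prod_range (fun i => (∑ l ∈ Finset.range q, u l * v l ^ i) ^ c s i)]
    refine Finset.prod_congr rfl fun i _ => ?_
    simp [c]

theorem hI_nzd (F : Type*) [Field F] (q n : ℕ) (hqn : q ≤ n) (P : MvPolynomial (Fin (n + q)) F)
    (hP : hdel (xs F (n + q)) q * P ∈ maxMinors F q n) : P ∈ maxMinors F q n := by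
  let E := AlgebraicClosure F
  let R := MvPolynomial (ℕ ⊕ ℕ) E
  let U : ℕ → R := fun l => X (Sum.inl l)
  let V : ℕ → R := fun l => X (Sum.inr l)
  have h1 := aeval_hI (R := R) q n U V _ hP
  rw [map_mul] at h1
  have hev : ∀ (u v : ℕ → E) (Q : MvPolynomial (Fin (n + q)) F),
      aeval (fun i : Fin (n + q) => ∑ l ∈ Finset.range q, u l * v l ^ (i : ℕ)) Q =
      aeval (Sum.elim u v)
        (aeval (fun i : Fin (n + q) => ∑ l ∈ Finset.range q, U l * V l ^ (i : ℕ)) Q) := by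
    intro u v Q
    have : (aeval (fun i : Fin (n + q) => ∑ l ∈ Finset.range q, u l * v l ^ (i : ℕ)) :
        MvPolynomial (Fin (n + q)) F →ₐ[F] E) =
      ((aeval (Sum.elim u v) : R →ₐ[E] E).restrictScalars F).comp
        (aeval (fun i : Fin (n + q) => ∑ l ∈ Finset.range q, U l * V l ^ (i : ℕ))) := by
      apply MvPolynomial.algHom_ext
      intro i
      simp [U, V]
    rw [this]; rfl
  apply mem_hI_of_vanish (E := E)
  intro u v
  rw [hev]
  rcases mul_eq_zero.1 h1 with h2 | h2
  · exfalso
    let v' : ℕ → E := Infinite.natEmbedding E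
    have h3 := hev (fun _ => 1) v' (hdel (xs F (n + q)) q)
    rw [h2, map_zero, hdel, AlgHom.map_det] at h3
    have h4 : (AlgHom.mapMatrix (aeval (R := F)
        fun i : Fin (n + q) => ∑ l ∈ Finset.range q, (1 : E) * v' l ^ (i : ℕ)))
        (Matrix.of fun i c : Fin q => xs F (n + q) (i + c)) =
        (Matrix.vandermonde fun l : Fin q => v' l)ᵀ * (Matrix.vandermonde fun l : Fin q => v' l) := by
      ext i c
      have : (i : ℕ) + c < n + q := by omega
      rw [Matrix.mul_apply]
      simp only [AlgHom.mapMatrix_apply, Matrix.map_apply, Matrix.of_apply, xs, dif_pos this,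
        aeval_X, one_mul, Matrix.transpose_apply, Matrix.vandermonde_apply]
      rw [← Fin.sum_univ_eq_sum_range (fun l => v' l ^ ((i : ℕ) + c))]
      simp only [pow_add]
    rw [h4, Matrix.det_mul, Matrix.det_transpose] at h3
    have h5 : (Matrix.vandermonde fun l : Fin q => v' l).det ≠ 0 := by
      rw [Matrix.det_vandermonde_ne_zero_iff]
      intro a b hab
      exact Fin.ext ((Infinite.natEmbedding E).injective hab)
    exact mul_ne_zero h5 h5 h3
  · rw [h2, map_zero]

theorem expand_det (F : Type*) [Field F] (p N k : ℕ) [CharP F p] (hp : p.Prime)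
    (M : Matrix (Fin k) (Fin k) (MvPolynomial (Fin N) F))
    (hM : ∀ i j, expand p (M i j) = M i j ^ p) : expand p M.det = M.det ^ p := by
  have : Fact p.Prime := ⟨hp⟩
  have h1 := RingHom.map_det (frobenius (MvPolynomial (Fin N) F) p) M
  rw [frobenius_def] at h1
  rw [h1, AlgHom.map_det]
  congr 1
  ext1 i j
  simp [hM, frobenius_def]

theorem expand_xs (F : Type*) [Field F] (p N i : ℕ) (hp : p.Prime) :
    expand p (xs F N i) = xs F N i ^ p := by
  unfold xs
  split_ifs
  · simp
  · simp [hp.ne_zero]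

theorem expand_hdel (F : Type*) [Field F] (p N q : ℕ) [CharP F p] (hp : p.Prime) :
    expand p (hdel (xs F N) q) = hdel (xs F N) q ^ p :=
  expand_det F p _ _ hp (Matrix.of fun i c : Fin q => xs F N (i + c))
    (fun _ _ => expand_xs F p _ _ hp)

theorem expand_bord (F : Type*) [Field F] (p N q j : ℕ) [CharP F p] (hp : p.Prime) :
    expand p (bord (xs F N) q j) = bord (xs F N) q j ^ p :=
  expand_det F p _ _ hp (Matrix.of fun i c : Fin (q + 1) =>
    xs F N (i + if (c : ℕ) < q then (c : ℕ) else j))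
    (fun _ _ => expand_xs F p _ _ hp)

theorem expand_hI_le (F : Type*) [Field F] (p q n : ℕ) [CharP F p] (hp : p.Prime) :
    Ideal.map (expand p) (maxMinors F q n) ≤ frobeniusPower p (maxMinors F q n) := by
  rw [Ideal.map_le_iff_le_comap]
  conv_lhs => rw [maxMinors]
  rw [Ideal.span_le]
  rintro _ ⟨g, rfl⟩
  have h := expand_det F p (n + q) (q + 1) hp
    (Matrix.of fun i c : Fin (q + 1) => xs F (n + q) (i + (g c : ℕ)))
    (fun i j => expand_xs F p _ _ hp)
  rw [SetLike.mem_coe, Ideal.mem_comap]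
  refine (congrArg (· ∈ frobeniusPower p (maxMinors F q n)) h).mpr ?_
  exact Ideal.subset_span ⟨_, Ideal.subset_span ⟨g, rfl⟩, rfl⟩

theorem bord_mem_maxMinors (F : Type*) [Field F] (q n j : ℕ) (hq : q ≤ n) (hj : j < n) :
    bord (xs F (n + q)) q j ∈ maxMinors F q n := by
  refine Ideal.subset_span ⟨fun c => ⟨if (c : ℕ) < q then (c : ℕ) else j, ?_⟩, rfl⟩
  split_ifs <;> omega

theorem hI_ne_top (F : Type*) [Field F] (q n : ℕ) : (1 : MvPolynomial (Fin (n + q)) F) ∉ maxMinors F q n := by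
  intro h
  have := aeval_hI (R := F) q n 0 0 _ h
  rw [map_one] at this
  exact one_ne_zero this

theorem hdel_pow_nzd (F : Type*) [Field F] (q n : ℕ) (hqn : q ≤ n) (m : ℕ)
    (P : MvPolynomial (Fin (n + q)) F)
    (hP : hdel (xs F (n + q)) q ^ m * P ∈ maxMinors F q n) : P ∈ maxMinors F q n := by
  induction m with
  | zero => simpa using hP
  | succ m ih =>
    apply ih
    apply hI_nzd F q n hqn
    rw [← mul_assoc, ← pow_succ']
    exact hP

theorem hdel_pow_nzd_map (F : Type*) [Field F] (p q n : ℕ) [CharP F p] (hp : p.Prime)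
    (hqn : q ≤ n) (m : ℕ) (P : MvPolynomial (Fin (n + q)) F)
    (hP : hdel (xs F (n + q)) q ^ m * P ∈ Ideal.map (expand p) (maxMinors F q n)) :
    P ∈ Ideal.map (expand p) (maxMinors F q n) := by
  induction m with
  | zero => simpa using hP
  | succ m ih =>
    apply ih
    apply expand_nzd F (n + q) p hp.pos _ (hdel (xs F (n + q)) q) (hI_nzd F q n hqn)
    rw [expand_hdel F p _ _ hp]
    obtain ⟨k, hk⟩ : ∃ k, p = k + 1 := ⟨p - 1, by have := hp.pos; omega⟩
    have : hdel (xs F (n + q)) q ^ p * (hdel (xs F (n + q)) q ^ m * P)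
        = hdel (xs F (n + q)) q ^ k * (hdel (xs F (n + q)) q ^ (m + 1) * P) := by
      rw [hk]; ring
    rw [this]
    exact Ideal.mul_mem_left _ _ hP

theorem dexp_apply {N k : ℕ} (g : Fin k → ℕ) (h : ∀ i j : Fin k, (i : ℕ) + g j < N) (m : Fin N) :
    dexp g h 1 m = ∑ i : Fin k, if (i : ℕ) + g i = m then 1 else 0 := by
  simp only [dexp, Finsupp.finsetSum_apply, Finsupp.single_apply, Fin.ext_iff]
  rfl

theorem pow_notMem_frob (F : Type*) [Field F] (p N : ℕ) [CharP F p] (hp : p.Prime)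
    (f : MvPolynomial (Fin N) F) (D : Fin N →₀ ℕ) (hD : ∀ i, D i = 1)
    (h1 : MonomialOrder.lex.degree f = D) (h2 : MonomialOrder.lex.leadingCoeff f = 1) :
    f ^ (p - 1) ∉ frobeniusPower p (Ideal.span (Set.range (X : Fin N → MvPolynomial (Fin N) F))) := by
  classical
  have : Fact p.Prime := ⟨hp⟩
  intro hmem
  have hle : frobeniusPower p (Ideal.span (Set.range (X : Fin N → MvPolynomial (Fin N) F))) ≤
      Ideal.span ((fun s => monomial s (1 : F)) '' (Set.range fun i : Fin N => Finsupp.single i p)) := by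
    rw [frobeniusPower, Ideal.span_le]
    rintro _ ⟨y, hy, rfl⟩
    change y ^ p ∈ _
    rw [SetLike.mem_coe] at hy
    have hfr : Ideal.span (Set.range (X : Fin N → MvPolynomial (Fin N) F)) ≤
        Ideal.comap (frobenius (MvPolynomial (Fin N) F) p) (Ideal.span
          ((fun s => monomial s (1 : F)) '' (Set.range fun i : Fin N => Finsupp.single i p))) := by
      rw [Ideal.span_le]
      rintro _ ⟨i, rfl⟩
      rw [SetLike.mem_coe, Ideal.mem_comap, frobenius_def, X_pow_eq_monomial]
      exact Ideal.subset_span ⟨_, ⟨i, rfl⟩, rfl⟩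
    exact hfr hy
  have h3 := mem_ideal_span_monomial_image.1 (hle hmem) ((p - 1) • D) (by
    rw [mem_support_iff]
    have h4 := MonomialOrder.leadingCoeff_pow (m := MonomialOrder.lex) f (p - 1)
    rw [MonomialOrder.leadingCoeff, MonomialOrder.degree_pow, h1, h2, one_pow] at h4
    rw [h4]; exact one_ne_zero)
  obtain ⟨_, ⟨i, rfl⟩, h5⟩ := h3
  have h6 := h5 i
  simp [hD] at h6
  have := hp.pos
  omega

theorem hankel_aux (F : Type*) [Field F] (p q n : ℕ) [CharP F p]
    (hp : p.Prime) (htn : q + 1 ≤ n) 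
    (D : Fin (n + q) →₀ ℕ) (hD : ∀ i, D i = 1) :
    ∃ f : MvPolynomial (Fin (n + q)) F,
      f.IsHomogeneous (n + q) ∧
      (∃ s ∉ maxMinors F q n, s * f ∈ maxMinors F q n ^ (n - q)) ∧
      coeff D f = 1 ∧
      (∀ d ∈ f.support, d ≠ D → toLex d < toLex D) ∧
      (∀ y ∈ maxMinors F q n, f ^ (p - 1) * y ∈ frobeniusPower p (maxMinors F q n)) ∧
      f ^ (p - 1) ∉ frobeniusPower p (Ideal.span (Set.range X)) := by
  classical
  have hqn : q ≤ n := by omega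
  obtain ⟨r₁, hr₁⟩ : ∃ r, r = (n + q + 1) / 2 - q := ⟨_, rfl⟩
  obtain ⟨r₂, hr₂⟩ : ∃ r, r = (n + q) / 2 - q := ⟨_, rfl⟩
  have hr : r₁ + r₂ = n - q := by omega
  set x := xs F (n + q) with hx
  set δ := hdel x q with hδ
  have hb₁ : ∀ i j : Fin (q + r₁), (i : ℕ) + (fun j : Fin (q + r₁) => (j : ℕ)) j < n + q := by
    intro i j; have := i.2; have := j.2; simp only; omega
  have hb₂ : ∀ i j : Fin (q + r₂), (i : ℕ) + (fun j : Fin (q + r₂) => 1 + (j : ℕ)) j < n + q := by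
    intro i j; have := i.2; have := j.2; simp only; omega
  have hm₁ : StrictMono (fun j : Fin (q + r₁) => (j : ℕ)) := fun a b h => h
  have hm₂ : StrictMono (fun j : Fin (q + r₂) => 1 + (j : ℕ)) := fun a b h =>
    Nat.add_lt_add_left h 1
  set f₁ := (hmat F _ hb₁).det with hf₁
  set f₂ := (hmat F _ hb₂).det with hf₂
  have hl₁ := lex_degree_eq f₁ _ (hmat_coeff F _ hm₁ hb₁) (hmat_support F _ hm₁ hb₁)
  have hl₂ := lex_degree_eq f₂ _ (hmat_coeff F _ hm₂ hb₂) (hmat_support F _ hm₂ hb₂)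
  have hDs : dexp _ hb₁ 1 + dexp _ hb₂ 1 = D := by
    ext m
    rw [Finsupp.add_apply, dexp_apply, dexp_apply, hD]
    have hm := m.2
    rcases Nat.even_or_odd' (m : ℕ) with ⟨k, hk | hk⟩
    · have h2 : (∑ i : Fin (q + r₂), if (i : ℕ) + (1 + (i : ℕ)) = m then 1 else 0) = 0 :=
        Finset.sum_eq_zero fun i _ => if_neg (by omega)
      have h1 : (∑ i : Fin (q + r₁), if (i : ℕ) + (i : ℕ) = m then 1 else 0) = 1 := by
        rw [Finset.sum_eq_single_of_mem ⟨k, by omega⟩ (Finset.mem_univ _)]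
        · exact if_pos (by change k + k = (m : ℕ); omega)
        · intro i _ hi
          exact if_neg fun h => hi (Fin.ext (by change (i : ℕ) = k; omega))
      exact congrArg₂ (· + ·) h1 h2
    · have h1 : (∑ i : Fin (q + r₁), if (i : ℕ) + (i : ℕ) = m then 1 else 0) = 0 :=
        Finset.sum_eq_zero fun i _ => if_neg (by omega)
      have h2 : (∑ i : Fin (q + r₂), if (i : ℕ) + (1 + (i : ℕ)) = m then 1 else 0) = 1 := by
        rw [Finset.sum_eq_single_of_mem ⟨k, by omega⟩ (Finset.mem_univ _)]
        · exact if_pos (by change k + (1 + k) = (m : ℕ); omega)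
        · intro i _ hi
          exact if_neg fun h => hi (Fin.ext (by change (i : ℕ) = k; omega))
      exact congrArg₂ (· + ·) h1 h2
  have hne₁ : f₁ ≠ 0 := by
    intro h; have := hl₁.2; rw [h] at this; simp at this
  have hne₂ : f₂ ≠ 0 := by
    intro h; have := hl₂.2; rw [h] at this; simp at this
  have hdeg : MonomialOrder.lex.degree (f₁ * f₂) = D := by
    rw [MonomialOrder.degree_mul hne₁ hne₂, hl₁.1, hl₂.1, hDs]
  have hlc : MonomialOrder.lex.leadingCoeff (f₁ * f₂) = 1 := by
    rw [MonomialOrder.leadingCoeff_mul, hl₁.2, hl₂.2, one_mul]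
  let K := Ideal.span (Set.range fun l : Fin (n - q) => bord x q (q + l))
  have hKI : K ≤ maxMinors F q n := by
    rw [Ideal.span_le]
    rintro _ ⟨l, rfl⟩
    have := l.2
    exact bord_mem_maxMinors F q n _ hqn (by omega)
  have hK₁ : δ ^ r₁ * f₁ ∈ K ^ r₁ := by
    have := hdel_pow_mul_det_mem x q r₁ 0 (fun j => (j : ℕ)) K (by
      intro i hi j
      have := j.2
      exact bord_mem x q n _ (by omega))
    convert this using 3
    ext1 i j
    have := hb₁ i j
    simp only at this
    simp [hmat, hx, xs, this]
  have hK₂ : δ ^ r₂ * f₂ ∈ K ^ r₂ := by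
    have := hdel_pow_mul_det_mem x q r₂ 0 (fun j => 1 + (j : ℕ)) K (by
      intro i hi j
      have := j.2
      exact bord_mem x q n _ (by omega))
    convert this using 3
    ext1 i j
    have := hb₂ i j
    simp only at this
    simp [hmat, hx, xs, this]
  have hKf : δ ^ (n - q) * (f₁ * f₂) ∈ K ^ (n - q) := by
    have := Ideal.mul_mem_mul hK₁ hK₂
    rw [← pow_add, hr] at this
    convert this using 1
    rw [← hr]; ring
  have hKy : ∀ y ∈ maxMinors F q n, δ * y ∈ K := by
    intro y hy
    induction hy using Submodule.span_induction with
    | zero => rw [mul_zero]; exact K.zero_mem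
    | add a b _ _ h1 h2 => rw [mul_add]; exact K.add_mem h1 h2
    | smul r a _ h => rw [smul_eq_mul, mul_left_comm]; exact K.mul_mem_left _ h
    | mem y hy =>
      obtain ⟨g, rfl⟩ := hy
      have := hdel_pow_mul_det_mem x q 1 0 (fun j => (g j : ℕ)) K (by
        intro i hi j
        have := (g j).2
        exact bord_mem x q n _ (by omega))
      rw [pow_one, pow_one] at this
      simpa only [zero_add] using this
  refine ⟨f₁ * f₂, ?_, ⟨δ ^ (n - q), ?_, Ideal.pow_right_mono hKI _ hKf⟩, ?_, ?_, ?_, ?_⟩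
  · have := (hmat_homog F _ hb₁).mul (hmat_homog F _ hb₂)
    convert this using 1
    omega
  · intro h
    apply hI_ne_top F q n
    apply hdel_pow_nzd F q n hqn (n - q)
    rw [mul_one]; exact h
  · rw [← hdeg]; exact hlc
  · intro d hd hne
    have h1 : toLex d ≤ toLex D := by
      have := MonomialOrder.lex.le_degree hd
      rw [hdeg] at this
      exact this
    exact lt_of_le_of_ne h1 fun h => hne (toLex.injective h)
  · intro y hy
    apply expand_hI_le F p q n hp
    apply hdel_pow_nzd_map F p q n hp hqn ((n - q) * (p - 1) + 1)
    have h1 : (δ ^ (n - q) * (f₁ * f₂)) ^ (p - 1) * (δ * y) ∈ K ^ ((n - q) * (p - 1) + 1) := by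
      rw [pow_succ, pow_mul]
      exact Ideal.mul_mem_mul (Ideal.pow_mem_pow hKf _) (hKy y hy)
    have h2 := pigeonhole_pow (fun l : Fin (n - q) => bord x q (q + l))
      (Ideal.map (expand p) (maxMinors F q n)) (p - 1) ((n - q) * (p - 1) + 1) (by
        intro l
        have hl := l.2
        have h3 := Ideal.mem_map_of_mem (expand p) (bord_mem_maxMinors F q n (q + l) hqn (by omega))
        have h4 := hp.pos
        rw [Nat.sub_add_cancel h4]
        rw [expand_bord F p _ _ _ hp] at h3
        exact h3) (by simp)
    have h3 := h2 h1
    convert h3 using 1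
    rw [← hx, ← hδ]
    rw [pow_succ, pow_mul, mul_pow (δ ^ (n - q))]
    ring
  · exact pow_notMem_frob F p _ hp _ D hD hdeg hlc

/-- Fedder's criterion setup for the Hankel determinantal ring: there is a homogeneous `f` in
the symbolic power `I^{(n-t+1)}` (i.e. `s·f ∈ I^{n-t+1}` for some `s ∉ I`) whose lex-initial
term (for `x_1 > x_2 > ... > x_{n+t-1}`) is the squarefree monomial `x_1 x_2 ··· x_{n+t-1}`;
consequently `f^{p-1} ∈ (I^{[p]} :_A I)` but `f^{p-1} ∉ m^{[p]}`, whence `A/I` is `F`-pure. -/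
theorem hankel_fedder_element (F : Type*) [Field F] (p t n : ℕ) [CharP F p]
    (hp : p.Prime) (ht : 2 ≤ t) (htn : t ≤ n)
    (H : Matrix (Fin t) (Fin n) (MvPolynomial (Fin (n + t - 1)) F))
    (hH : ∀ a b, H a b = X ⟨(a : ℕ) + (b : ℕ), by have := a.2; have := b.2; omega⟩)
    (I : Ideal (MvPolynomial (Fin (n + t - 1)) F))
    (hI : I = Ideal.span (Set.range fun g : Fin t → Fin n => (H.submatrix id g).det))
    (m : Ideal (MvPolynomial (Fin (n + t - 1)) F))
    (hm : m = Ideal.span (Set.range X))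
    (D : Fin (n + t - 1) →₀ ℕ) (hD : D = ∑ i : Fin (n + t - 1), Finsupp.single i 1) :
    ∃ f : MvPolynomial (Fin (n + t - 1)) F,
      f.IsHomogeneous (n + t - 1) ∧
      (∃ s ∉ I, s * f ∈ I ^ (n - t + 1)) ∧
      coeff D f = 1 ∧
      (∀ d ∈ f.support, d ≠ D → toLex d < toLex D) ∧
      (∀ y ∈ I, f ^ (p - 1) * y ∈ frobeniusPower p I) ∧
      f ^ (p - 1) ∉ frobeniusPower p m := by
  obtain ⟨q, rfl⟩ : ∃ q, t = q + 1 := ⟨t - 1, by omega⟩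
  have hI' : I = maxMinors F q n := by
    rw [hI]
    unfold maxMinors
    congr 1
    congr 1
    funext g
    congr 1
    ext1 i c
    have : (i : ℕ) + (g c : ℕ) < n + q := by
      have := i.2; have := (g c).2; omega
    simp only [Matrix.submatrix_apply, id, hH, Matrix.of_apply, xs, dif_pos this]
  have hn : n - (q + 1) + 1 = n - q := by omega
  have hD' : ∀ i, D i = 1 := by
    intro i
    rw [hD, Finsupp.finsetSum_apply]
    simp [Finsupp.single_apply]
  rw [hn, hI', hm]
  exact hankel_aux F p q n hp htn D hD'
end

section
/- Let H be a t×n Hankel matrix of indeterminates over a field F of characteristic p > 0, with t ≤ n. Then the F-pure threshold of the ideal I_t(H) in F[x_1,...,x_{n+t-1}] equals min{ (n+t-2i+1)/(t-i+1) : i = 1,...,t }. -/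
set_option synthInstance.maxHeartbeats 1000000
set_option maxHeartbeats 1000000

open MvPolynomial Matrix Filter

theorem hk_lead (F : Type*) [Field F] (N t : ℕ) (a : Fin t → Fin t → Fin N)
    (M : Matrix (Fin t) (Fin t) (MvPolynomial (Fin N) F)) (hM : ∀ i j, M i j = X (a i j))
    (mono : ∀ i i' j j', i ≤ i' → j ≤ j' → (i < i' ∨ j < j') → a i j < a i' j') :
    M.det ≠ 0 ∧ MonomialOrder.lex.degree M.det = ∑ i, Finsupp.single (a i i) 1 := by
  classical
  let d : Equiv.Perm (Fin t) → (Fin N →₀ ℕ) := fun σ => ∑ i, Finsupp.single (a (σ i) i) 1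
  have hlt : ∀ σ, σ ≠ 1 → toLex (d σ) < toLex (d 1) := by
    intro σ hσ
    have hne : (Finset.univ.filter fun i => σ i ≠ i).Nonempty := by
      by_contra h
      rw [Finset.not_nonempty_iff_eq_empty, Finset.filter_eq_empty_iff] at h
      apply hσ
      ext i
      have := h (Finset.mem_univ i)
      simp only [ne_eq, not_not] at this
      simp [this]
    obtain ⟨i0, hi0, hmin⟩ := Finset.exists_min_image _ id hne
    simp only [Finset.mem_filter, Finset.mem_univ, true_and, id] at hi0 hmin
    have hfix : ∀ i, i < i0 → σ i = i := by
      intro i hi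
      by_contra h
      exact absurd (hmin i h) (not_le.mpr hi)
    have hge : ∀ i, i0 ≤ i → i0 ≤ σ i := by
      intro i hi
      by_contra h
      push Not at h
      have h2 := hfix _ h
      have := σ.injective h2
      rw [this] at h
      exact absurd hi (not_le.mpr h)
    have hbig : ∀ i, i0 ≤ i → a i0 i0 < a (σ i) i := by
      intro i hi
      apply mono _ _ _ _ (hge i hi) hi
      rcases eq_or_lt_of_le hi with h | h
      · left; subst h; exact lt_of_le_of_ne (hge _ le_rfl) (Ne.symm hi0)
      · right; exact h
    rw [Finsupp.Lex.lt_iff]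
    refine ⟨a i0 i0, ?_, ?_⟩
    · intro u hu
      simp only [d, ofLex_toLex, Finsupp.finsetSum_apply]
      apply Finset.sum_congr rfl
      intro i _
      rcases lt_or_ge i i0 with h | h
      · simp [hfix i h]
      · have h1 := hbig i h
        have h2 : a i0 i0 ≤ a i i := by
          rcases eq_or_lt_of_le h with h | h
          · subst h; rfl
          · exact (mono _ _ _ _ h.le h.le (Or.inl h)).le
        rw [Finsupp.single_eq_of_ne, Finsupp.single_eq_of_ne]
        · exact (lt_of_lt_of_le hu h2).ne
        · exact (hu.trans h1).ne
    · simp only [d, ofLex_toLex, Finsupp.finsetSum_apply]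
      apply Finset.sum_lt_sum
      · intro i _
        rcases lt_or_ge i i0 with h | h
        · simp [hfix i h]
        · rw [Finsupp.single_eq_of_ne (hbig i h).ne]; exact Nat.zero_le _
      · refine ⟨i0, Finset.mem_univ _, ?_⟩
        rw [Finsupp.single_eq_of_ne (hbig i0 le_rfl).ne]
        simp
  have hdet : M.det = ∑ σ : Equiv.Perm (Fin t),
      ((Equiv.Perm.sign σ : ℤ)) • monomial (d σ) (1 : F) := by
    rw [Matrix.det_apply]
    apply Finset.sum_congr rfl
    intro σ _
    have : ∏ i, M (σ i) i = monomial (d σ) (1 : F) := by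
      simp only [hM, d, X]
      rw [monomial_sum_one]
    rw [this]; rfl
  have hc : ∀ c, coeff c M.det = ∑ σ : Equiv.Perm (Fin t),
      ((Equiv.Perm.sign σ : ℤ)) • (if d σ = c then (1 : F) else 0) := by
    intro c
    rw [hdet, coeff_sum]
    apply Finset.sum_congr rfl
    intro σ _
    rw [← coeff_monomial]
    exact map_zsmul (MvPolynomial.coeffAddMonoidHom c) _ _
  have hc1 : coeff (d 1) M.det = 1 := by
    rw [hc, Finset.sum_eq_single 1]
    · simp
    · intro σ _ h
      have := (hlt σ h).ne
      rw [if_neg, smul_zero]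
      intro h; exact this (by rw [h])
    · simp
  have hne : M.det ≠ 0 := by
    intro h; rw [h] at hc1; simp at hc1
  refine ⟨hne, ?_⟩
  change _ = d 1
  apply MonomialOrder.lex.toSyn.injective
  apply le_antisymm
  · rw [MonomialOrder.degree_le_iff]
    intro c hcm
    rw [mem_support_iff, hc] at hcm
    obtain ⟨σ, _, hσ⟩ := Finset.exists_ne_zero_of_sum_ne_zero hcm
    have : d σ = c := by
      by_contra h; simp [h] at hσ
    rw [← this, MonomialOrder.lex_le_iff]
    by_cases h : σ = 1
    · rw [h]
    · exact (hlt σ h).le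
  · apply MonomialOrder.le_degree
    rw [mem_support_iff, hc1]; exact one_ne_zero

theorem hk_mem (F : Type*) [Field F] (p N e : ℕ) [CharP F p] (hp : p.Prime)
    (m : Ideal (MvPolynomial (Fin N) F)) (hm : m = Ideal.span (Set.range X))
    (f : MvPolynomial (Fin N) F) :
    f ∈ Ideal.span ((fun q => q ^ (p ^ e)) '' (m : Set (MvPolynomial (Fin N) F))) ↔
      ∀ d ∈ f.support, ∃ i, p ^ e ≤ d i := by
  have : Fact p.Prime := ⟨hp⟩
  have h1 : Ideal.span ((fun q => q ^ (p ^ e)) '' (m : Set (MvPolynomial (Fin N) F)))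
      = Ideal.span ((fun s => monomial s (1 : F)) ''
        (Set.range fun i : Fin N => Finsupp.single i (p ^ e))) := by
    have : Ideal.span ((fun q => q ^ (p ^ e)) '' (m : Set (MvPolynomial (Fin N) F)))
      = Ideal.map (iterateFrobenius (MvPolynomial (Fin N) F) p e) m := rfl
    rw [this, hm, Ideal.map_span]
    congr 1
    ext x
    simp [iterateFrobenius_def, X_pow_eq_monomial]
  rw [h1, mem_ideal_span_monomial_image]
  simp

/-- minors with prescribed leading term -/
theorem hk_minor (F : Type*) [Field F] (t n : ℕ)
    (H : Matrix (Fin t) (Fin n) (MvPolynomial (Fin (n + t - 1)) F))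
    (hH : ∀ (a : Fin t) (b : Fin n) (k : Fin (n + t - 1)), (k : ℕ) = (a : ℕ) + (b : ℕ) → H a b = X k)
    (S : Finset (Fin (n + t - 1))) (hS : S.card = t)
    (hadj : ∀ u ∈ S, ∀ v ∈ S, (v : ℕ) ≠ u + 1) :
    ∃ g : Fin t → Fin n, (H.submatrix id g).det ≠ 0 ∧
      MonomialOrder.lex.degree (H.submatrix id g).det = ∑ v ∈ S, Finsupp.single v 1 := by
  let s := S.orderEmbOfFin hS
  have hs : ∀ i, s i ∈ S := fun i => S.orderEmbOfFin_mem hS i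
  have hstep : ∀ i j : Fin t, i < j → (s i : ℕ) + 2 ≤ s j := by
    intro i j hij
    have h1 : s i < s j := s.strictMono hij
    have h2 := hadj _ (hs i) _ (hs j)
    have h1' : (s i : ℕ) < s j := h1
    omega
  have hgap : ∀ k : ℕ, ∀ i j : Fin t, (j : ℕ) = i + k → (s i : ℕ) + 2 * k ≤ s j := by
    intro k
    induction k with
    | zero => intro i j h; have : i = j := Fin.ext (by omega); subst this; simp
    | succ k ih =>
      intro i j h
      have hk : (i : ℕ) + k < t := by have := j.2; omega
      have h1 := ih i ⟨i + k, hk⟩ rfl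
      have h2 := hstep ⟨i + k, hk⟩ j (by rw [Fin.lt_def]; simp; omega)
      omega
  have hlo : ∀ i : Fin t, 2 * (i : ℕ) ≤ s i := by
    intro i
    have := hgap i ⟨0, by have := i.2; omega⟩ i (by simp)
    omega
  have hhi : ∀ i : Fin t, (s i : ℕ) < n + i := by
    intro i
    have h1 := hgap (t - 1 - i) i ⟨t - 1, by have := i.2; omega⟩ (by have := i.2; simp; omega)
    have h2 := (s ⟨t - 1, by have := i.2; omega⟩).2
    have := i.2
    omega
  let g : Fin t → Fin n := fun i => ⟨s i - i, by have := hhi i; have := hlo i; omega⟩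
  have hg : ∀ i j, i < j → (g i : ℕ) < g j := by
    intro i j hij
    have := hgap (j - i) i j (by have : (i : ℕ) < j := hij; omega)
    have h1 := hlo i
    have h2 := hlo j
    have : (i : ℕ) < j := hij
    simp only [g]
    omega
  obtain ⟨h1, h2⟩ := hk_lead F (n + t - 1) t
    (fun i j => ⟨(i : ℕ) + (g j : ℕ), by have := i.2; have := (g j).2; omega⟩)
    (H.submatrix id g) (fun i j => hH _ _ _ rfl) (by
      intro i i' j j' hi hj h
      rw [Fin.lt_def]
      simp only
      have hi' : (i : ℕ) ≤ i' := hi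
      have hj' : (g j : ℕ) ≤ g j' := by
        rcases eq_or_lt_of_le hj with h | h
        · rw [h]
        · exact (hg _ _ h).le
      rcases h with h | h
      · have : (i : ℕ) < i' := h
        omega
      · have := hg _ _ h
        omega)
  refine ⟨g, h1, h2.trans ?_⟩
  have : S = Finset.univ.map s.toEmbedding := by
    rw [Finset.map_orderEmbOfFin_univ]
  refine Eq.trans ?_ (congrArg (fun T : Finset (Fin (n + t - 1)) =>
    ∑ v ∈ T, (Finsupp.single v 1 : Fin (n + t - 1) →₀ ℕ)) this).symm
  simp only [Finset.sum_map]
  apply Finset.sum_congr rfl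
  intro i _
  congr 1
  apply Fin.ext
  have := hlo i
  simp only [g]
  change _ = (s i : ℕ)
  omega

theorem hk_not_le (F : Type*) [Field F] (p N e : ℕ) [CharP F p] (hp : p.Prime)
    (m : Ideal (MvPolynomial (Fin N) F)) (hm : m = Ideal.span (Set.range X))
    (f : MvPolynomial (Fin N) F) (hf : f ≠ 0)
    (hd : ∀ i, MonomialOrder.lex.degree f i < p ^ e) :
    f ∉ Ideal.span ((fun q => q ^ (p ^ e)) '' (m : Set (MvPolynomial (Fin N) F))) := by
  rw [hk_mem F p N e hp m hm]
  intro h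
  obtain ⟨i, hi⟩ := h _ (MonomialOrder.degree_mem_support hf)
  exact absurd hi (not_le.mpr (hd i))

theorem hk_pow_le (F : Type*) [Field F] (p N e : ℕ) [CharP F p] (hp : p.Prime)
    (m : Ideal (MvPolynomial (Fin N) F)) (hm : m = Ideal.span (Set.range X))
    (s : ℕ) (hs : N * (p ^ e - 1) < s) :
    m ^ s ≤ Ideal.span ((fun q => q ^ (p ^ e)) '' (m : Set (MvPolynomial (Fin N) F))) := by
  intro f hf
  rw [hk_mem F p N e hp m hm]
  have hm' : m = idealOfVars (Fin N) F := hm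
  rw [hm', mem_pow_idealOfVars_iff] at hf
  intro d hd
  by_contra h
  push Not at h
  have h1 := hf d hd
  have h2 : Finsupp.degree d ≤ N * (p ^ e - 1) := by
    rw [Finsupp.degree_eq_sum]
    calc ∑ i, d i ≤ ∑ i : Fin N, (p ^ e - 1) := Finset.sum_le_sum fun i _ => by
          have := h i; omega
      _ = _ := by simp
  omega

theorem hk_I_le (F : Type*) [Field F] (t n N : ℕ)
    (H : Matrix (Fin t) (Fin n) (MvPolynomial (Fin N) F))
    (m : Ideal (MvPolynomial (Fin N) F)) (hH : ∀ a b, H a b ∈ m) :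
    Ideal.span (Set.range fun g : Fin t → Fin n => (H.submatrix id g).det) ≤ m ^ t := by
  rw [Ideal.span_le]
  rintro _ ⟨g, rfl⟩
  simp only [SetLike.mem_coe]
  rw [Matrix.det_apply]
  apply Ideal.sum_mem
  intro σ _
  have : ∏ i, (H.submatrix id g) (σ i) i ∈ m ^ t := by
    have := Ideal.prod_mem_prod (s := Finset.univ) (I := fun _ : Fin t => m)
      (x := fun i => (H.submatrix id g) (σ i) i) (fun i _ => hH _ _)
    simpa using this
  rw [Units.smul_def]
  exact zsmul_mem this _

/-- lower bound, wide case -/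
theorem hk_wide (F : Type*) [Field F] (p t n e : ℕ) [CharP F p] (hp : p.Prime)
    (ht : 2 ≤ t) (htn : t < n)
    (H : Matrix (Fin t) (Fin n) (MvPolynomial (Fin (n + t - 1)) F))
    (hH : ∀ (a : Fin t) (b : Fin n) (k : Fin (n + t - 1)), (k : ℕ) = (a : ℕ) + (b : ℕ) → H a b = X k)
    (m : Ideal (MvPolynomial (Fin (n + t - 1)) F)) (hm : m = Ideal.span (Set.range X))
    (s : ℕ) (hs : t * s < p ^ e) :
    ¬ (Ideal.span (Set.range fun g : Fin t → Fin n => (H.submatrix id g).det)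
        ^ ((n + t - 1) * s) ≤
      Ideal.span ((fun q => q ^ (p ^ e)) '' (m : Set (MvPolynomial (Fin (n + t - 1)) F)))) := by
  have : NeZero (n + t - 1) := ⟨by omega⟩
  let r : Fin (n + t - 1) → Fin t → Fin (n + t - 1) :=
    fun j k => j + ⟨2 * (k : ℕ), by have := k.2; omega⟩
  have hrval : ∀ j k, ((r j k : Fin _) : ℕ) =
      if (j : ℕ) + 2 * k < n + t - 1 then (j : ℕ) + 2 * k else j + 2 * k - (n + t - 1) := by
    intro j k
    simp only [r, Fin.val_add]
    have h1 := j.2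
    have h2 := k.2
    split_ifs with h
    · exact Nat.mod_eq_of_lt h
    · rw [Nat.mod_eq_sub_mod (by omega), Nat.mod_eq_of_lt (by omega)]
  have hinj : ∀ j, Function.Injective (r j) := by
    intro j k l h
    have h1 := add_left_cancel h
    apply Fin.ext
    have := congrArg Fin.val h1
    simp at this
    omega
  have hex : ∀ j, ∃ g : Fin t → Fin n, (H.submatrix id g).det ≠ 0 ∧
      MonomialOrder.lex.degree (H.submatrix id g).det = ∑ k, Finsupp.single (r j k) 1 := by
    intro j
    obtain ⟨g, hg1, hg2⟩ := hk_minor F t n H hH (Finset.univ.map ⟨r j, hinj j⟩) (by simp) (by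
      intro u hu v hv
      simp only [Finset.mem_map, Finset.mem_univ, true_and, Function.Embedding.coeFn_mk] at hu hv
      obtain ⟨k, rfl⟩ := hu
      obtain ⟨l, rfl⟩ := hv
      rw [hrval, hrval]
      have := k.2
      have := l.2
      have := j.2
      split_ifs <;> omega)
    refine ⟨g, hg1, hg2.trans ?_⟩
    rw [Finset.sum_map]; rfl
  choose g hg1 hg2 using hex
  let P := ∏ j, (H.submatrix id (g j)).det
  have hP : P ≠ 0 := Finset.prod_ne_zero_iff.mpr fun j _ => hg1 j
  have hPd : MonomialOrder.lex.degree P = t • ∑ v, Finsupp.single v 1 := by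
    rw [MonomialOrder.degree_prod (fun j _ => hg1 j)]
    simp_rw [hg2]
    rw [Finset.sum_comm]
    have : ∀ k : Fin t, ∑ j, Finsupp.single (r j k) 1 =
        ∑ v : Fin (n + t - 1), (Finsupp.single v 1 : Fin (n + t - 1) →₀ ℕ) := by
      intro k
      exact Equiv.sum_comp (Equiv.addRight (⟨2 * (k : ℕ), by have := k.2; omega⟩ : Fin (n + t - 1)))
        (fun v => (Finsupp.single v 1 : Fin (n + t - 1) →₀ ℕ))
    simp [this]
  intro hle
  refine hk_not_le F p _ e hp m hm (P ^ s) (pow_ne_zero _ hP) ?_ (hle ?_)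
  · intro i
    rw [MonomialOrder.degree_pow, hPd]
    simp [Finsupp.finsetSum_apply, Finsupp.single_apply]
    rw [mul_comm]; exact hs
  · rw [pow_mul]
    apply Ideal.pow_mem_pow
    have := Ideal.prod_mem_prod (s := Finset.univ) (x := fun j => (H.submatrix id (g j)).det)
      (I := fun _ : Fin (n + t - 1) =>
        Ideal.span (Set.range fun g : Fin t → Fin n => (H.submatrix id g).det))
      (fun j _ => Ideal.subset_span ⟨g j, rfl⟩)
    simpa using this

/-- lower bound, square case -/
theorem hk_square (F : Type*) [Field F] (p t n e : ℕ) [CharP F p] (hp : p.Prime)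
    (ht : 2 ≤ t) (htn : t ≤ n)
    (H : Matrix (Fin t) (Fin n) (MvPolynomial (Fin (n + t - 1)) F))
    (hH : ∀ (a : Fin t) (b : Fin n) (k : Fin (n + t - 1)), (k : ℕ) = (a : ℕ) + (b : ℕ) → H a b = X k)
    (m : Ideal (MvPolynomial (Fin (n + t - 1)) F)) (hm : m = Ideal.span (Set.range X)) :
    ¬ (Ideal.span (Set.range fun g : Fin t → Fin n => (H.submatrix id g).det)
        ^ (p ^ e - 1) ≤
      Ideal.span ((fun q => q ^ (p ^ e)) '' (m : Set (MvPolynomial (Fin (n + t - 1)) F)))) := by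
  have hpos : 0 < p ^ e := pow_pos hp.pos e
  let r : Fin t → Fin (n + t - 1) := fun k => ⟨2 * (k : ℕ), by have := k.2; omega⟩
  have hinj : Function.Injective r := by
    intro k l h
    apply Fin.ext
    have := congrArg Fin.val h
    simp [r] at this
    omega
  obtain ⟨g, hg1, hg2⟩ := hk_minor F t n H hH (Finset.univ.map ⟨r, hinj⟩) (by simp) (by
      intro u hu v hv
      simp only [Finset.mem_map, Finset.mem_univ, true_and, Function.Embedding.coeFn_mk] at hu hv
      obtain ⟨k, rfl⟩ := hu
      obtain ⟨l, rfl⟩ := hv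
      simp only [r]
      omega)
  intro hle
  refine hk_not_le F p _ e hp m hm ((H.submatrix id g).det ^ (p ^ e - 1)) (pow_ne_zero _ hg1) ?_
    (hle (Ideal.pow_mem_pow (Ideal.subset_span (Set.mem_range_self g)) _))
  intro i
  rw [MonomialOrder.degree_pow, hg2]
  have : (∑ v ∈ Finset.univ.map (⟨r, hinj⟩ : Fin t ↪ Fin (n + t - 1)), (Finsupp.single v 1 : Fin (n + t - 1) →₀ ℕ)) i ≤ 1 := by
    rw [Finsupp.finsetSum_apply]
    simp only [Finsupp.single_apply]
    rw [Finset.sum_ite_eq']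
    split_ifs <;> simp
  rw [Finsupp.smul_apply, smul_eq_mul]
  calc _ ≤ (p ^ e - 1) * 1 := Nat.mul_le_mul_left _ this
    _ < _ := by omega

theorem hk_square_up (F : Type*) [Field F] (q t N : ℕ) (ht : t ≠ 0)
    (H : Matrix (Fin t) (Fin t) (MvPolynomial (Fin N) F))
    (m : Ideal (MvPolynomial (Fin N) F)) (hH : ∀ a b, H a b ∈ m) :
    Ideal.span (Set.range fun g : Fin t → Fin t => (H.submatrix id g).det) ^ q ≤
      Ideal.span ((fun f => f ^ q) '' (m : Set (MvPolynomial (Fin N) F))) := by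
  have h1 : Ideal.span (Set.range fun g : Fin t → Fin t => (H.submatrix id g).det) ≤
      Ideal.span {H.det} := by
    rw [Ideal.span_le]
    rintro _ ⟨g, rfl⟩
    simp only [SetLike.mem_coe, Ideal.mem_span_singleton]
    have : H.submatrix id g = H * (1 : Matrix (Fin t) (Fin t) _).submatrix id g := by
      ext i j
      simp [Matrix.mul_apply, Matrix.one_apply]
    rw [this, Matrix.det_mul]
    exact dvd_mul_right _ _
  refine (Ideal.pow_right_mono h1 q).trans ?_
  rw [Ideal.span_singleton_pow, Ideal.span_singleton_le_iff_mem]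
  apply Ideal.subset_span
  refine ⟨H.det, ?_, rfl⟩
  apply Ideal.pow_le_self ht
  apply hk_I_le F t t N H m hH
  exact Ideal.subset_span ⟨id, by simp⟩

theorem hk_lim (p : ℕ) (hp : p.Prime) (ν : ℕ → ℕ) (L C : ℝ)
    (h1 : ∀ e, L * (p : ℝ) ^ e - C ≤ ν e) (h2 : ∀ e, (ν e : ℝ) ≤ L * (p : ℝ) ^ e) :
    Tendsto (fun e : ℕ => (ν e : ℝ) / (p ^ e : ℝ)) atTop (nhds L) := by
  have hpos : ∀ e : ℕ, (0 : ℝ) < (p : ℝ) ^ e := fun e => pow_pos (by exact_mod_cast hp.pos) e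
  have hlim : Tendsto (fun e : ℕ => L - C / (p : ℝ) ^ e) atTop (nhds L) := by
    have h : Tendsto (fun e : ℕ => (p : ℝ) ^ e) atTop atTop :=
      tendsto_pow_atTop_atTop_of_one_lt (by exact_mod_cast hp.one_lt)
    simpa using tendsto_const_nhds.sub (h.const_div_atTop C)
  refine tendsto_of_tendsto_of_tendsto_of_le_of_le hlim tendsto_const_nhds ?_ ?_
  · intro e
    have := hpos e
    simp only
    rw [le_div_iff₀ this, sub_mul, div_mul_cancel₀ _ this.ne']
    exact h1 e
  · intro e
    simp only
    rw [div_le_iff₀ (hpos e)]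
    exact h2 e

/-- The `F`-pure threshold of the Hankel determinantal ideal `I_t(H)` in the polynomial ring
`F[x_1,...,x_{n+t-1}]` (char `p > 0`) equals `min{(n+t-2i+1)/(t-i+1) : i = 1,...,t}`:
with `ν_e(I) = max{r : I^r ⊄ m^{[p^e]}}`, the limit of `ν_e(I)/p^e` is this minimum. -/
theorem hankel_fpt_ideal (F : Type*) [Field F] (p t n : ℕ) [CharP F p]
    (hp : p.Prime) (ht : 2 ≤ t) (htn : t ≤ n)
    (H : Matrix (Fin t) (Fin n) (MvPolynomial (Fin (n + t - 1)) F))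
    (hH : ∀ a b, H a b = X ⟨(a : ℕ) + (b : ℕ), by have := a.2; have := b.2; omega⟩)
    (I : Ideal (MvPolynomial (Fin (n + t - 1)) F))
    (hI : I = Ideal.span (Set.range fun g : Fin t → Fin n => (H.submatrix id g).det))
    (m : Ideal (MvPolynomial (Fin (n + t - 1)) F))
    (hm : m = Ideal.span (Set.range X)) :
    ∃ ν : ℕ → ℕ,
      (∀ e : ℕ,
        ¬ (I ^ (ν e) ≤ Ideal.span ((fun q => q ^ (p ^ e)) '' (m : Set _))) ∧
        I ^ (ν e + 1) ≤ Ideal.span ((fun q => q ^ (p ^ e)) '' (m : Set _))) ∧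
      Tendsto (fun e : ℕ => (ν e : ℝ) / (p ^ e : ℝ)) atTop
        (nhds ((Finset.Icc 1 t).inf' ⟨1, by simp [Finset.mem_Icc]; omega⟩
          (fun i : ℕ => ((n : ℝ) + t - 2 * i + 1) / ((t : ℝ) - i + 1)))) := by
  have : NeZero (n + t - 1) := ⟨by omega⟩
  have hHm : ∀ a b, H a b ∈ m := by
    intro a b; rw [hH, hm]; exact Ideal.subset_span ⟨_, rfl⟩
  have hH' : ∀ (a : Fin t) (b : Fin n) (k : Fin (n + t - 1)), (k : ℕ) = (a : ℕ) + (b : ℕ) → H a b = X k := by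
    intro a b k h
    rw [hH]
    congr 1
    exact Fin.ext h.symm
  have hIt : I ≤ m ^ t := by rw [hI]; exact hk_I_le F t n _ H m hHm
  have hup : ∀ e s : ℕ, (n + t - 1) * (p ^ e - 1) < t * s →
      I ^ s ≤ Ideal.span ((fun q => q ^ (p ^ e)) '' (m : Set _)) := by
    intro e s hs
    refine (Ideal.pow_right_mono hIt s).trans ?_
    rw [← pow_mul]
    exact hk_pow_le F p _ e hp m hm _ hs
  have hex : ∀ e : ℕ, ∃ s : ℕ, I ^ (s + 1) ≤ Ideal.span ((fun q => q ^ (p ^ e)) '' (m : Set _)) := by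
    intro e
    refine ⟨(n + t - 1) * (p ^ e - 1), hup e _ ?_⟩
    exact lt_of_lt_of_le (Nat.lt_succ_self _) (Nat.le_mul_of_pos_left _ (by omega))
  classical
  let ν : ℕ → ℕ := fun e => Nat.find (hex e)
  have hν2 : ∀ e, I ^ (ν e + 1) ≤ Ideal.span ((fun q => q ^ (p ^ e)) '' (m : Set _)) :=
    fun e => Nat.find_spec (hex e)
  have hν1 : ∀ e, ¬ (I ^ (ν e) ≤ Ideal.span ((fun q => q ^ (p ^ e)) '' (m : Set _))) := by
    intro e h
    rcases Nat.eq_zero_or_pos (ν e) with h0 | h0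
    · rw [h0] at h
      refine hk_not_le F p _ e hp m hm 1 one_ne_zero ?_ (h (by simp))
      intro i
      simpa [MonomialOrder.degree_one] using pow_pos hp.pos e
    · refine Nat.find_min (hex e) (m := ν e - 1) (by change ν e - 1 < ν e; omega) ?_
      rwa [Nat.sub_add_cancel h0]
  have hlow : ∀ e s, ¬ (I ^ s ≤ Ideal.span ((fun q => q ^ (p ^ e)) '' (m : Set _))) → s ≤ ν e := by
    intro e s h
    by_contra hlt
    push Not at hlt
    exact h ((Ideal.pow_le_pow_right hlt).trans (hν2 e))
  have hupp : ∀ e s, (I ^ s ≤ Ideal.span ((fun q => q ^ (p ^ e)) '' (m : Set _))) → ν e < s := by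
    intro e s h
    by_contra hlt
    push Not at hlt
    exact hν1 e ((Ideal.pow_le_pow_right hlt).trans h)
  refine ⟨ν, fun e => ⟨hν1 e, hν2 e⟩, ?_⟩
  have htR : (0 : ℝ) < t := by exact_mod_cast (by omega : 0 < t)
  rcases eq_or_lt_of_le htn with heq | hlt
  · -- square case
    have hval : ((Finset.Icc 1 t).inf' ⟨1, by simp [Finset.mem_Icc]; omega⟩
          (fun i : ℕ => ((n : ℝ) + t - 2 * i + 1) / ((t : ℝ) - i + 1))) = 1 := by
      have hn : (n : ℝ) = t := by rw [heq]
      apply le_antisymm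
      · refine (Finset.inf'_le _ (Finset.mem_Icc.mpr ⟨by omega, le_refl t⟩)).trans ?_
        rw [hn]; apply le_of_eq; ring_nf
      · apply Finset.le_inf'
        intro i hi
        have : (i : ℝ) ≤ t := by exact_mod_cast (Finset.mem_Icc.mp hi).2
        rw [hn, le_div_iff₀ (by linarith)]
        linarith
    rw [hval]
    have hsq : ∀ e, ν e + 1 = p ^ e := by
      intro e
      have hpos : 0 < p ^ e := pow_pos hp.pos e
      have h1 : p ^ e - 1 ≤ ν e := by
        apply hlow; rw [hI]; exact hk_square F p t n e hp ht htn H hH' m hm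
      have h2 : ν e < p ^ e := by
        apply hupp
        rw [hI]
        clear * - heq hHm ht
        subst heq
        exact hk_square_up F (p ^ e) t _ (by omega) H m hHm
      omega
    apply hk_lim p hp ν 1 1
    · intro e
      have : (ν e : ℝ) + 1 = (p : ℝ) ^ e := by exact_mod_cast hsq e
      linarith
    · intro e
      have : (ν e : ℝ) + 1 = (p : ℝ) ^ e := by exact_mod_cast hsq e
      linarith
  · have hcast : (((n + t - 1 : ℕ)) : ℝ) = (n : ℝ) + t - 1 := by
      rw [Nat.cast_sub (by omega)]; push_cast; ring
    have hnt : (t : ℝ) + 1 ≤ n := by exact_mod_cast hlt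
    have hval : ((Finset.Icc 1 t).inf' ⟨1, by simp [Finset.mem_Icc]; omega⟩
          (fun i : ℕ => ((n : ℝ) + t - 2 * i + 1) / ((t : ℝ) - i + 1))) =
          ((n + t - 1 : ℕ) : ℝ) / t := by
      rw [hcast]
      apply le_antisymm
      · refine (Finset.inf'_le _ (Finset.mem_Icc.mpr ⟨le_refl 1, by omega⟩)).trans ?_
        apply le_of_eq; push_cast; ring_nf
      · apply Finset.le_inf'
        intro i hi
        have h1 : (i : ℝ) ≤ t := by exact_mod_cast (Finset.mem_Icc.mp hi).2
        have h2 : (1 : ℝ) ≤ i := by exact_mod_cast (Finset.mem_Icc.mp hi).1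
        rw [div_le_div_iff₀ htR (by linarith)]
        nlinarith [mul_nonneg (sub_nonneg.mpr h2) (sub_nonneg.mpr hnt)]
    rw [hval]
    apply hk_lim p hp ν _ ((n + t - 1 : ℕ) : ℝ)
    · intro e
      have hpos : 0 < p ^ e := pow_pos hp.pos e
      have h1 : (n + t - 1) * ((p ^ e - 1) / t) ≤ ν e := by
        apply hlow; rw [hI]
        apply hk_wide F p t n e hp ht hlt H hH' m hm
        have := Nat.mul_div_le (p ^ e - 1) t
        omega
      have h2 : p ^ e ≤ t * ((p ^ e - 1) / t) + t := by
        have := Nat.div_add_mod (p ^ e - 1) t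
        have := Nat.mod_lt (p ^ e - 1) (by omega : 0 < t)
        omega
      have h1' : ((n + t - 1 : ℕ) : ℝ) * ((p ^ e - 1) / t : ℕ) ≤ ν e := by exact_mod_cast h1
      have h2' : (p : ℝ) ^ e ≤ t * ((p ^ e - 1) / t : ℕ) + t := by exact_mod_cast h2
      refine le_trans ?_ h1'
      have h3 : (p : ℝ) ^ e / t ≤ ((p ^ e - 1) / t : ℕ) + 1 := by
        rw [div_le_iff₀ htR]; linarith
      have h4 := mul_le_mul_of_nonneg_left h3 (Nat.cast_nonneg (α := ℝ) (n + t - 1))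
      have h5 : ((n + t - 1 : ℕ) : ℝ) / t * (p : ℝ) ^ e = ((n + t - 1 : ℕ) : ℝ) * ((p : ℝ) ^ e / t) := by
        ring
      rw [h5]; linarith
    · intro e
      have h1 : t * ν e ≤ (n + t - 1) * p ^ e := by
        by_contra h
        push Not at h
        refine hν1 e (hup e _ (lt_of_le_of_lt (Nat.mul_le_mul_left _ (Nat.sub_le _ _)) h))
      have h1' : (t : ℝ) * ν e ≤ ((n + t - 1 : ℕ) : ℝ) * (p : ℝ) ^ e := by exact_mod_cast h1
      rw [div_mul_eq_mul_div, le_div_iff₀ htR]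
      linarith
end
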